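/- arXiv:1905.00368 — 2 statements merged into one kernel-verified Lean document; each statement's English description precedes it below -/
import Mathlib

section
/- Let A, B, Y be Polish metric spaces and let D ⊆ FP(A, 𝒫_p(B)) × FP(A × B, Y) be the set of all pairs (μ′, μ) such that und_A(μ′) equals the marginal of μ on A × B. Then the map J : D → FP(A, FP(B, Y)) defined by J(μ′, μ) := disint_A(μ) (disintegrating μ ∈ 𝒫_p(A × B × Y) with respect to the A-coordinate) is continuous, where D carries the product of the respective (nested) p-Wasserstein metrics. -/
open MeasureTheory ProbabilityTheory ENNReal Filter Topology

noncomputable section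

namespace AWPaper

/-! ### Generic constructions -/

variable {α β : Type*}

/-- The set of couplings of two measures. -/
def Cpl [MeasurableSpace α] [MeasurableSpace β] (μ : Measure α) (ν : Measure β) :
    Set (Measure (α × β)) :=
  {π | π.map Prod.fst = μ ∧ π.map Prod.snd = ν}

/-- The `p`-Wasserstein distance (with values in `ℝ≥0∞`) associated to an
`ℝ≥0∞`-valued distance function `d`. -/
def Wp [MeasurableSpace α] (p : ℝ) (d : α → α → ℝ≥0∞) (μ ν : Measure α) : ℝ≥0∞ :=
  ⨅ π ∈ Cpl μ ν, (∫⁻ z, d z.1 z.2 ^ p ∂π) ^ (1 / p)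

/-- The topology generated by the open balls of an `ℝ≥0∞`-valued distance
function.  For a genuine metric this is the metric topology. -/
def ballTop (d : α → α → ℝ≥0∞) : TopologicalSpace α :=
  TopologicalSpace.generateFrom {s | ∃ x ε, 0 < ε ∧ s = {y | d x y < ε}}

/-- The product distance of two `ℝ≥0∞`-valued distances, `ℓ^p`-style. -/
def prodDist (p : ℝ) (d₁ : α → α → ℝ≥0∞) (d₂ : β → β → ℝ≥0∞) :
    α × β → α × β → ℝ≥0∞ :=
  fun u v => (d₁ u.1 v.1 ^ p + d₂ u.2 v.2 ^ p) ^ (1 / p)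

/-- Membership in the `p`-Wasserstein space: a probability measure with finite
`p`-th moment (w.r.t. the distance function `d`). -/
def MemPp [MeasurableSpace α] (p : ℝ) (d : α → α → ℝ≥0∞) (μ : Measure α) : Prop :=
  IsProbabilityMeasure μ ∧ ∃ x₀, ∫⁻ x, d x₀ x ^ p ∂μ ≠ ∞

/-- The weak topology on measures induced by integration of bounded continuous
functions, for a given topology `τ` on the base space. -/
def weakTop [MeasurableSpace α] (τ : TopologicalSpace α) : TopologicalSpace (Measure α) :=
  TopologicalSpace.induced
    (fun μ => fun f : @BoundedContinuousFunction α ℝ τ _ => ∫ x, f x ∂μ)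
    Pi.topologicalSpace

/-- The product topology built from two explicitly given topologies. -/
def prodTop (τ₁ : TopologicalSpace α) (τ₂ : TopologicalSpace β) : TopologicalSpace (α × β) :=
  TopologicalSpace.induced Prod.fst τ₁ ⊓ TopologicalSpace.induced Prod.snd τ₂

/-- An everywhere-defined version of the disintegration kernel: it agrees with
`Measure.condKernel` on finite measures. -/
def condK [MeasurableSpace α] [MeasurableSpace β] [StandardBorelSpace β] [Nonempty β]
    (ρ : Measure (α × β)) : Kernel α β :=
  letI := Classical.dec (IsFiniteMeasure ρ)
  if h : IsFiniteMeasure ρ then @Measure.condKernel α β _ _ _ _ ρ h else 0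

/-- The disintegration map `𝒫(A × B) → 𝒫(A × 𝒫(B))`. -/
def disint [MeasurableSpace α] [MeasurableSpace β] [StandardBorelSpace β] [Nonempty β]
    (μ : Measure (α × β)) : Measure (α × Measure β) :=
  μ.map (fun z => (z.1, condK μ z.1))

/-- The intensity ("und") map `𝒫(A × 𝒫(B)) → 𝒫(A × B)`. -/
def und [MeasurableSpace α] [MeasurableSpace β] (μ : Measure (α × Measure β)) :
    Measure (α × β) :=
  μ.bind (fun z => (Measure.dirac z.1).prod z.2)

/-! ### Path spaces -/

variable {X : Type*} [MeasurableSpace X]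

/-- The path-space distance `ρ̄((x_t),(y_t)) = (∑ ρ(x_t,y_t)^p)^{1/p}`. -/
def pathDist (p : ℝ) (d : X → X → ℝ≥0∞) {N : ℕ} :
    (Fin N → X) → (Fin N → X) → ℝ≥0∞ :=
  fun x y => (∑ t, d (x t) (y t) ^ p) ^ (1 / p)

/-- The first `t` coordinates of a path. -/
def restr {N : ℕ} (t : ℕ) (h : t ≤ N) (x : Fin N → X) : Fin t → X :=
  fun s => x (Fin.castLE h s)

/-- The last `N - t` coordinates of a path. -/
def tailr {N : ℕ} (t : ℕ) (h : t ≤ N) (x : Fin N → X) : Fin (N - t) → X :=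
  fun s => x ⟨t + s.1, by have := s.2; omega⟩

/-- A coupling `π` of two path measures is causal: for every `t` and Borel
`A ⊆ 𝒳^t`, `π((Y_1,…,Y_t) ∈ A | X) = π((Y_1,…,Y_t) ∈ A | X_1,…,X_t)` a.s. -/
def Causal {N : ℕ} (π : Measure ((Fin N → X) × (Fin N → X))) : Prop :=
  ∀ (t : ℕ) (h : t ≤ N) (A : Set (Fin t → X)), MeasurableSet A →
    (π[fun z => A.indicator (fun _ => (1 : ℝ)) (restr t h z.2) |
        MeasurableSpace.comap Prod.fst inferInstance])
      =ᵐ[π]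
    (π[fun z => A.indicator (fun _ => (1 : ℝ)) (restr t h z.2) |
        MeasurableSpace.comap (fun z => restr t h z.1) inferInstance])

/-- Bicausal couplings. -/
def Bicausal {N : ℕ} (π : Measure ((Fin N → X) × (Fin N → X))) : Prop :=
  Causal π ∧ Causal (π.map Prod.swap)

/-- The causal Wasserstein "distance" `CW_p`. -/
def CW (p : ℝ) (d : X → X → ℝ≥0∞) {N : ℕ} (μ ν : Measure (Fin N → X)) : ℝ≥0∞ :=
  ⨅ π ∈ {π ∈ Cpl μ ν | Causal π}, (∫⁻ z, pathDist p d z.1 z.2 ^ p ∂π) ^ (1 / p)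

/-- The symmetrized causal Wasserstein distance `SCW_p`. -/
def SCW (p : ℝ) (d : X → X → ℝ≥0∞) {N : ℕ} (μ ν : Measure (Fin N → X)) : ℝ≥0∞ :=
  max (CW p d μ ν) (CW p d ν μ)

/-- The adapted (nested, bicausal) Wasserstein distance `AW_p`. -/
def AW (p : ℝ) (d : X → X → ℝ≥0∞) {N : ℕ} (μ ν : Measure (Fin N → X)) : ℝ≥0∞ :=
  ⨅ π ∈ {π ∈ Cpl μ ν | Bicausal π}, (∫⁻ z, pathDist p d z.1 z.2 ^ p ∂π) ^ (1 / p)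

/-! ### Nested spaces (Pflug's nested distributions / Vershik's iterated spaces) -/

/-- A measurable space together with an `ℝ≥0∞`-valued distance. -/
structure QMS : Type 1 where
  carrier : Type
  inst : MeasurableSpace carrier
  dist : carrier → carrier → ℝ≥0∞

/-- The nested sequence of spaces: `nest X _ d p 0 = 𝒳` (this is `𝒳_N`), and
`nest X _ d p (k+1) = 𝒳 × 𝒫(nest X _ d p k)` with the nested distance
`D = (ρ^p + 𝒲_p^p)^{1/p}`.  Thus `𝒳_1` (for `N = k+1` time points) is
`nest X _ d p k`. -/
def nest (X : Type) (mX : MeasurableSpace X) (d : X → X → ℝ≥0∞) (p : ℝ) : ℕ → QMS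
  | 0 => ⟨X, mX, d⟩
  | (k + 1) =>
    let Q := nest X mX d p k
    ⟨X × @Measure Q.carrier Q.inst,
      @Prod.instMeasurableSpace _ _ mX (@Measure.instMeasurableSpace _ Q.inst),
      fun a b => (d a.1 b.1 ^ p + (@Wp _ Q.inst p Q.dist a.2 b.2) ^ p) ^ (1 / p)⟩

section NMapSec

variable (Y : Type) [mY : MeasurableSpace Y] [TopologicalSpace Y] [PolishSpace Y]
  [BorelSpace Y] [Nonempty Y]

/-- The map `𝒩` sending the law of a process with `k+1` time steps to the
corresponding nested distribution, via iterated regular conditional laws. -/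
def NMap (d : Y → Y → ℝ≥0∞) (p : ℝ) :
    ∀ k : ℕ, Measure (Fin (k + 1) → Y) →
      @Measure (nest Y mY d p k).carrier (nest Y mY d p k).inst
  | 0, μ =>
    letI : MeasurableSpace (nest Y mY d p 0).carrier := (nest Y mY d p 0).inst
    μ.map (fun x => x 0)
  | (k + 1), μ =>
    letI : MeasurableSpace (nest Y mY d p k).carrier := (nest Y mY d p k).inst
    letI : MeasurableSpace (nest Y mY d p (k + 1)).carrier := (nest Y mY d p (k + 1)).inst
    (μ.map (fun x => x 0)).map
      (fun x₀ => (x₀, NMap d p k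
        ((condK (μ.map (fun x => (x 0, fun s : Fin (k + 1) => x s.succ)))) x₀)))

end NMapSec

section PathStructures

variable {Y : Type*} [mY : MeasurableSpace Y]

/-- A process `L` is adapted: `L t` depends only on the first `t+1` coordinates. -/
def AdaptedProc {N : ℕ} (L : Fin N → (Fin N → Y) → ℝ) : Prop :=
  ∀ (t : Fin N) (x y : Fin N → Y), (∀ s : Fin N, s ≤ t → x s = y s) → L t x = L t y

/-- `τ` is a stopping time of the canonical filtration on the path space. -/
def IsStopTime {N : ℕ} (τ : (Fin N → Y) → Fin N) : Prop :=
  ∀ t : Fin N,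
    MeasurableSet[MeasurableSpace.comap (restr (X := Y) (t.1 + 1) t.2) inferInstance]
      {x | τ x = t}

/-- The optimal stopping value `v^L(μ)`. -/
def stopVal {N : ℕ} (L : Fin N → (Fin N → Y) → ℝ) (μ : Measure (Fin N → Y)) : ℝ :=
  ⨅ τ : {τ : (Fin N → Y) → Fin N // IsStopTime τ}, ∫ x, L (τ.1 x) x ∂μ

variable [TopologicalSpace Y]

/-- `AC(X̄)`: adapted processes which are continuous and bounded. -/
def ACbdd {N : ℕ} (L : Fin N → (Fin N → Y) → ℝ) : Prop :=
  (∀ t, Continuous (L t)) ∧ AdaptedProc L ∧ ∃ C : ℝ, ∀ t x, |L t x| ≤ C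

/-- `AC_p(X̄)`: adapted continuous processes of growth of order `p`. -/
def ACp (p : ℝ) (d : Y → Y → ℝ≥0∞) {N : ℕ} (L : Fin N → (Fin N → Y) → ℝ) : Prop :=
  (∀ t, Continuous (L t)) ∧ AdaptedProc L ∧
    ∃ (C : ℝ) (x₀ : Fin N → Y), ∀ t x, |L t x| ≤ C * (1 + ((pathDist p d x₀ x) ^ p).toReal)

/-- The optimal stopping topology (weak version, bounded continuous rewards). -/
def stopTopW (N : ℕ) : TopologicalSpace (Measure (Fin N → Y)) :=
  ⨅ L : {L : Fin N → (Fin N → Y) → ℝ // ACbdd L},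
    TopologicalSpace.induced (stopVal L.1) inferInstance

/-- The `𝒲_p`-optimal stopping topology. -/
def stopTopWp (p : ℝ) (d : Y → Y → ℝ≥0∞) (N : ℕ) :
    TopologicalSpace (Measure (Fin N → Y)) :=
  ⨅ L : {L : Fin N → (Fin N → Y) → ℝ // ACp p d L},
    TopologicalSpace.induced (stopVal L.1) inferInstance

variable [PolishSpace Y] [BorelSpace Y] [Nonempty Y]

/-- Hellwig's map `I_t`, sending `μ` to the joint law of the first `t`
coordinates together with the conditional law of the remaining coordinates. -/
def infoMap (N t : ℕ) (h : t ≤ N) (μ : Measure (Fin N → Y)) :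
    Measure ((Fin t → Y) × Measure (Fin (N - t) → Y)) :=
  μ.map (fun x => (restr t h x,
    condK (μ.map (fun y => (restr t h y, tailr t h y))) (restr t h x)))

/-- Hellwig's information topology (weak version). -/
def infoTopW (N : ℕ) : TopologicalSpace (Measure (Fin N → Y)) :=
  ⨅ (t : ℕ) (_ : 1 ≤ t) (h : t ≤ N - 1),
    TopologicalSpace.induced (infoMap N t (le_trans h (Nat.sub_le N 1)))
      (weakTop (prodTop Pi.topologicalSpace (weakTop Pi.topologicalSpace)))

/-- The `𝒲_p`-information topology. -/
def infoTopWp (p : ℝ) (d : Y → Y → ℝ≥0∞) (N : ℕ) :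
    TopologicalSpace (Measure (Fin N → Y)) :=
  ⨅ (t : ℕ) (_ : 1 ≤ t) (h : t ≤ N - 1),
    TopologicalSpace.induced (infoMap N t (le_trans h (Nat.sub_le N 1)))
      (ballTop (Wp p (prodDist p (pathDist p d) (Wp p (pathDist p d)))))

/-- Aldous' prediction process `Z_t^μ` (as a function of the path). -/
def predict (N : ℕ) (μ : Measure (Fin N → Y)) (t : ℕ) (h : t ≤ N) :
    (Fin N → Y) → Measure (Fin N → Y) :=
  fun x => condK (μ.map (fun y => (restr t h y, y))) (restr t h x)

/-- Aldous' map `E`, sending `μ` to the joint law of the path together with its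
prediction process. -/
def aldousMap (N : ℕ) (μ : Measure (Fin N → Y)) :
    Measure ((Fin N → Y) × (Fin (N + 1) → Measure (Fin N → Y))) :=
  μ.map (fun x =>
    (x, fun t : Fin (N + 1) => predict N μ t.1 (Nat.lt_succ_iff.mp t.2) x))

/-- Aldous' extended weak topology. -/
def aldousTopW (N : ℕ) : TopologicalSpace (Measure (Fin N → Y)) :=
  TopologicalSpace.induced (aldousMap N)
    (weakTop (prodTop Pi.topologicalSpace
      (@Pi.topologicalSpace (Fin (N + 1)) (fun _ => Measure (Fin N → Y))
        (fun _ => weakTop Pi.topologicalSpace))))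

/-- The extended `𝒲_p`-topology. -/
def aldousTopWp (p : ℝ) (d : Y → Y → ℝ≥0∞) (N : ℕ) :
    TopologicalSpace (Measure (Fin N → Y)) :=
  TopologicalSpace.induced (aldousMap N)
    (ballTop (Wp p (prodDist p (pathDist p d)
      (fun Z Z' : Fin (N + 1) → Measure (Fin N → Y) =>
        (∑ t, Wp p (pathDist p d) (Z t) (Z' t) ^ p) ^ (1 / p)))))

end PathStructures

/-! ### The lifted two-time-point space `𝒳₁ × 𝒫_p(𝒳₂)` -/

section Lifted

variable {A B : Type*} [MeasurableSpace A] [MeasurableSpace B]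

/-- The nested distance on `𝒳₁ × 𝒫_p(𝒳₂)`. -/
def liftDist (p : ℝ) (dA : A → A → ℝ≥0∞) (dB : B → B → ℝ≥0∞) :
    (A × Measure B) → (A × Measure B) → ℝ≥0∞ :=
  fun u v => (dA u.1 v.1 ^ p + Wp p dB u.2 v.2 ^ p) ^ (1 / p)

/-- `η` is a version of the measure-valued conditional expectation
`E_γ[X̂₂ | Y⃗]` (i.e. the barycenter of a regular conditional law of `X̂₂`
given `Y⃗ = (Y₁, Ŷ₂)`). -/
def IsCondBar (γ : Measure ((A × Measure B) × (A × Measure B)))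
    (η : (A × Measure B) × (A × Measure B) → Measure B) : Prop :=
  (∃ g : (A × Measure B) → Measure B, Measurable g ∧ ∀ z, η z = g z.2) ∧
  (∀ z, IsProbabilityMeasure (η z)) ∧
  ∀ S : Set (A × Measure B), MeasurableSet S → ∀ E : Set B, MeasurableSet E →
    ∫⁻ z in {z | z.2 ∈ S}, η z E ∂γ = ∫⁻ z in {z | z.2 ∈ S}, z.1.2 E ∂γ

/-- `AW̄_p`, the `p`-Wasserstein distance on `𝒫_p(𝒳₁ × 𝒫_p(𝒳₂))`. -/
def AWbar (p : ℝ) (dA : A → A → ℝ≥0∞) (dB : B → B → ℝ≥0∞)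
    (μ ν : Measure (A × Measure B)) : ℝ≥0∞ :=
  Wp p (liftDist p dA dB) μ ν

/-- `CW̄_p`, the lifted causal Wasserstein "distance". -/
def CWbar (p : ℝ) (dA : A → A → ℝ≥0∞) (dB : B → B → ℝ≥0∞)
    (μ ν : Measure (A × Measure B)) : ℝ≥0∞ :=
  ⨅ γ ∈ Cpl μ ν, ⨅ η ∈ {η | IsCondBar γ η},
    (∫⁻ z, (dA z.1.1 z.2.1 ^ p + Wp p dB (η z) z.2.2 ^ p) ∂γ) ^ (1 / p)

/-- `SCW̄_p`, the symmetrization of `CW̄_p`. -/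
def SCWbar (p : ℝ) (dA : A → A → ℝ≥0∞) (dB : B → B → ℝ≥0∞)
    (μ ν : Measure (A × Measure B)) : ℝ≥0∞ :=
  max (CWbar p dA dB μ ν) (CWbar p dA dB ν μ)

/-- Membership in `𝒫_p(𝒳₁ × 𝒫_p(𝒳₂))`: a probability measure, concentrated on
`𝒳₁ × 𝒫_p(𝒳₂)`, with finite `p`-th moment for the nested distance. -/
def MemPpLift (p : ℝ) (dA : A → A → ℝ≥0∞) (dB : B → B → ℝ≥0∞)
    (μ : Measure (A × Measure B)) : Prop :=
  IsProbabilityMeasure μ ∧ (∀ᵐ z ∂μ, MemPp p dB z.2) ∧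
    ∃ z₀ : A × Measure B, MemPp p dB z₀.2 ∧ ∫⁻ z, liftDist p dA dB z₀ z ^ p ∂μ ≠ ∞

/-- Two-time-point causality: given a coupling `π` of measures on products
`A₁ × B₁` and `A₂ × B₂`, the conditional law of `Y₁` given `X = (X₁, X₂)`
coincides with the conditional law of `Y₁` given `X₁`. -/
def Causal2 {A₁ B₁ A₂ B₂ : Type*} [MeasurableSpace A₁] [MeasurableSpace B₁]
    [MeasurableSpace A₂] [MeasurableSpace B₂]
    (π : Measure ((A₁ × B₁) × (A₂ × B₂))) : Prop :=
  ∀ S : Set A₂, MeasurableSet S →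
    (π[fun z => S.indicator (fun _ => (1 : ℝ)) z.2.1 |
        MeasurableSpace.comap Prod.fst inferInstance])
      =ᵐ[π]
    (π[fun z => S.indicator (fun _ => (1 : ℝ)) z.2.1 |
        MeasurableSpace.comap (fun z => z.1.1) inferInstance])

/-- The two-time-point causal Wasserstein "distance" on `𝒫_p(𝒳₁ × 𝒳₂)`. -/
def CW2 (p : ℝ) (dA : A → A → ℝ≥0∞) (dB : B → B → ℝ≥0∞)
    (μ ν : Measure (A × B)) : ℝ≥0∞ :=
  ⨅ π ∈ {π ∈ Cpl μ ν | Causal2 π},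
    (∫⁻ z, (dA z.1.1 z.2.1 ^ p + dB z.1.2 z.2.2 ^ p) ∂π) ^ (1 / p)

end Lifted

open MeasureTheory ProbabilityTheory ENNReal Filter Topology

/-! ### Helper lemmas -/

theorem aux_lp_two {p : ℝ} (hp : 1 ≤ p) (a b c d : ℝ≥0∞) :
    ((a + b) ^ p + (c + d) ^ p) ^ (1 / p) ≤ (a ^ p + c ^ p) ^ (1 / p) + (b ^ p + d ^ p) ^ (1 / p) := by
  have h := ENNReal.Lp_add_le (Finset.univ : Finset (Fin 2)) (fun i => if i = 0 then a else c)
    (fun i => if i = 0 then b else d) hp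
  simpa [Fin.sum_univ_two] using h

theorem aux_prodDist_le {α β : Type*} {p : ℝ} (hp : 1 ≤ p) {d₁ : α → α → ℝ≥0∞}
    {d₂ : β → β → ℝ≥0∞} {u v w : α × β} {x y : ℝ≥0∞}
    (h₁ : d₁ u.1 w.1 ≤ d₁ u.1 v.1 + x)
    (h₂ : d₂ u.2 w.2 ≤ d₂ u.2 v.2 + y) :
    prodDist p d₁ d₂ u w ≤ prodDist p d₁ d₂ u v + (x ^ p + y ^ p) ^ (1 / p) := by
  unfold prodDist
  have hp0 : 0 ≤ p := by linarith
  refine le_trans ?_ (aux_lp_two hp _ _ _ _)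
  gcongr

/-- Minkowski's inequality for lower integrals, one function being measurable. -/
theorem aux_minkowski {α : Type*} [MeasurableSpace α] (μ : Measure α) {p : ℝ} (hp : 1 ≤ p)
    (f g : α → ℝ≥0∞) (hg : Measurable g) :
    (∫⁻ a, (f a + g a) ^ p ∂μ) ^ (1 / p) ≤
      (∫⁻ a, f a ^ p ∂μ) ^ (1 / p) + (∫⁻ a, g a ^ p ∂μ) ^ (1 / p) := by
  have hp0 : 0 < p := by linarith
  obtain ⟨h, hm, hle, heq⟩ := exists_measurable_le_lintegral_eq μ (fun a => (f a + g a) ^ p)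
  rw [heq]
  have hmk : Measurable (fun a => h a ^ (1 / p) - g a) := (hm.pow_const _).sub hg
  have h1 : ∀ a, h a ^ (1 / p) - g a ≤ f a := fun a => by
    rw [tsub_le_iff_right]
    calc h a ^ (1 / p) ≤ ((f a + g a) ^ p) ^ (1 / p) := by gcongr; exact hle a
      _ = f a + g a := by rw [← ENNReal.rpow_mul]; simp [hp0.ne']
  have h2 : ∀ a, h a ≤ ((h a ^ (1 / p) - g a) + g a) ^ p := fun a => by
    calc h a = (h a ^ (1 / p)) ^ p := by rw [← ENNReal.rpow_mul]; simp [hp0.ne']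
      _ ≤ _ := by gcongr; exact le_tsub_add
  calc (∫⁻ a, h a ∂μ) ^ (1 / p) ≤ (∫⁻ a, ((h a ^ (1 / p) - g a) + g a) ^ p ∂μ) ^ (1 / p) := by
        gcongr with a; exact h2 a
    _ ≤ (∫⁻ a, (h a ^ (1 / p) - g a) ^ p ∂μ) ^ (1 / p) + (∫⁻ a, g a ^ p ∂μ) ^ (1 / p) :=
        ENNReal.lintegral_Lp_add_le hmk.aemeasurable hg.aemeasurable hp
    _ ≤ _ := by gcongr with a; exact h1 a

/-- Gluing of couplings. -/
theorem aux_glue {X Z W : Type*} [MeasurableSpace X] [MeasurableSpace Z] [MeasurableSpace W]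
    [StandardBorelSpace W] [Nonempty W] (π : Measure (X × Z)) (σ : Measure (Z × W))
    [IsFiniteMeasure π] [IsFiniteMeasure σ] (h : π.map Prod.snd = σ.map Prod.fst) :
    ∃ T : Measure ((X × Z) × W), T.map Prod.fst = π ∧ T.map (fun t => (t.1.2, t.2)) = σ := by
  refine ⟨π ⊗ₘ (σ.condKernel.comap Prod.snd measurable_snd), ?_, ?_⟩
  · exact Measure.fst_compProd _ _
  · have e : σ = σ.fst ⊗ₘ σ.condKernel := (σ.disintegrate σ.condKernel).symm
    have h' : σ.fst = π.map Prod.snd := h.symm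
    conv_rhs => rw [e, h']
    ext s hs
    rw [Measure.map_apply (by fun_prop) hs, Measure.compProd_apply
        ((show Measurable (fun t : (X × Z) × W => (t.1.2, t.2)) by fun_prop) hs),
      Measure.compProd_apply hs, lintegral_map (by exact Kernel.measurable_kernel_prodMk_left hs) measurable_snd]
    rfl

theorem aux_Wp_lt {α : Type*} [MeasurableSpace α] {p : ℝ} {d : α → α → ℝ≥0∞} {μ ν : Measure α}
    {r : ℝ≥0∞} (h : Wp p d μ ν < r) :
    ∃ π : Measure (α × α), π.map Prod.fst = μ ∧ π.map Prod.snd = ν ∧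
      (∫⁻ z, d z.1 z.2 ^ p ∂π) ^ (1 / p) < r := by
  unfold Wp at h
  simp only [iInf_lt_iff] at h
  obtain ⟨π, hπ, hr⟩ := h
  exact ⟨π, hπ.1, hπ.2, hr⟩

theorem aux_Wp_le {α : Type*} [MeasurableSpace α] {p : ℝ} {d : α → α → ℝ≥0∞} {μ ν : Measure α}
    (π : Measure (α × α)) (h₁ : π.map Prod.fst = μ) (h₂ : π.map Prod.snd = ν) :
    Wp p d μ ν ≤ (∫⁻ z, d z.1 z.2 ^ p ∂π) ^ (1 / p) :=
  iInf₂_le π ⟨h₁, h₂⟩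

theorem aux_Wp_self {α : Type*} [MeasurableSpace α] {p : ℝ} (hp : 1 ≤ p) {d : α → α → ℝ≥0∞}
    (hd : ∀ x, d x x = 0) (μ : Measure α) : Wp p d μ μ = 0 := by
  have hp0 : 0 < p := by linarith
  have hm : Measurable (fun x : α => (x, x)) := by fun_prop
  refine le_antisymm ?_ bot_le
  refine (aux_Wp_le (μ.map (fun x => (x, x))) ?_ ?_).trans ?_
  · rw [Measure.map_map measurable_fst hm]; exact Measure.map_id
  · rw [Measure.map_map measurable_snd hm]; exact Measure.map_id
  · calc _ ≤ (∫⁻ x, d x x ^ p ∂μ) ^ (1 / p) := by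
          gcongr; exact lintegral_map_le _ _
      _ = 0 := by simp [hd, hp0]

theorem aux_finite_of_map {α β : Type*} [MeasurableSpace α] [MeasurableSpace β] {f : α → β}
    (hf : Measurable f) {μ : Measure α} {ν : Measure β} [IsFiniteMeasure ν] (h : μ.map f = ν) :
    IsFiniteMeasure μ := by
  constructor
  have : μ Set.univ = ν Set.univ := by
    rw [← h, Measure.map_apply hf MeasurableSet.univ, Set.preimage_univ]
  rw [this]; exact measure_lt_top _ _

theorem aux_Wp_triangle {X : Type*} [MeasurableSpace X] [StandardBorelSpace X] [Nonempty X]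
    {p : ℝ} (hp : 1 ≤ p) {d : X → X → ℝ≥0∞} (hd : Measurable (fun z : X × X => d z.1 z.2))
    (htri : ∀ x y z, d x z ≤ d x y + d y z) (μ₁ μ₂ μ₃ : Measure X) [IsFiniteMeasure μ₂] :
    Wp p d μ₁ μ₃ ≤ Wp p d μ₁ μ₂ + Wp p d μ₂ μ₃ := by
  have hp0 : 0 ≤ p := by linarith
  conv_rhs => unfold Wp
  simp only [ENNReal.iInf_add, ENNReal.add_iInf]
  refine le_iInf₂ fun σ hσ => le_iInf₂ fun π hπ => ?_
  obtain ⟨hπ1, hπ2⟩ := hπ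
  obtain ⟨hσ1, hσ2⟩ := hσ
  have : IsFiniteMeasure π := aux_finite_of_map measurable_snd hπ2
  have : IsFiniteMeasure σ := aux_finite_of_map measurable_fst hσ1
  obtain ⟨T, hT1, hT2⟩ := aux_glue π σ (hπ2.trans hσ1.symm)
  have m13 : Measurable (fun t : (X × X) × X => (t.1.1, t.2)) := by fun_prop
  have m23 : Measurable (fun t : (X × X) × X => (t.1.2, t.2)) := by fun_prop
  have hdp : Measurable (fun z : X × X => d z.1 z.2 ^ p) := hd.pow_const _
  refine (aux_Wp_le (T.map (fun t => (t.1.1, t.2))) ?_ ?_).trans ?_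
  · rw [Measure.map_map measurable_fst m13, ← hπ1, ← hT1,
      Measure.map_map measurable_fst measurable_fst]
    rfl
  · rw [Measure.map_map measurable_snd m13, ← hσ2, ← hT2,
      Measure.map_map measurable_snd m23]
    rfl
  · rw [lintegral_map hdp m13]
    calc (∫⁻ t : (X × X) × X, d t.1.1 t.2 ^ p ∂T) ^ (1 / p)
        ≤ (∫⁻ t : (X × X) × X, (d t.1.1 t.1.2 + d t.1.2 t.2) ^ p ∂T) ^ (1 / p) := by
          gcongr; exact htri _ _ _
      _ ≤ _ := aux_minkowski T hp _ _ (hd.comp m23)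
      _ = _ := by
          rw [← hT2, ← hT1, lintegral_map hdp m23, lintegral_map hdp measurable_fst]

theorem aux_rat_approx {m e τ : ℝ≥0∞} (hm : m ≠ ∞) (hme : m * e ≠ ∞) (hτ : τ ≠ 0) :
    ∃ r : ℚ, ENNReal.ofReal r ≤ m ∧ (m - ENNReal.ofReal r) * e ≤ τ := by
  by_cases h0 : m = 0
  · exact ⟨0, by simp, by simp [h0]⟩
  by_cases he0 : e = 0
  · exact ⟨0, by simp, by simp [he0]⟩
  have he : e ≠ ∞ := fun h => hme (by rw [h, ENNReal.mul_top h0])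
  have hte : τ / e ≠ 0 := (ENNReal.div_pos hτ he).ne'
  have hlt : m - τ / e < m := ENNReal.sub_lt_self hm h0 hte
  obtain ⟨q, -, h1, h2⟩ := ENNReal.lt_iff_exists_rat_btwn.1 hlt
  refine ⟨q, h2.le, ?_⟩
  have h3 : m - ENNReal.ofReal q ≤ τ / e := by
    rw [tsub_le_iff_left]
    exact (tsub_le_iff_right.1 h1.le)
  calc _ ≤ τ / e * e := by gcongr
    _ = τ := ENNReal.div_mul_cancel he0 he

theorem aux_finsupp_approx {ι : Type*} [Countable ι] (m e : ι → ℝ≥0∞) (hm : ∀ i, m i ≠ ∞)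
    (hme : ∑' i, m i * e i ≠ ∞) {ε : ℝ≥0∞} (hε : ε ≠ 0) :
    ∃ q : ι →₀ ℚ, (∀ i, ENNReal.ofReal (q i) ≤ m i) ∧
      ∑' i, (m i - ENNReal.ofReal (q i)) * e i ≤ ε := by
  classical
  have hε2 : ε / 2 ≠ 0 := (ENNReal.half_pos hε).ne'
  obtain ⟨τ, hτ, hτs⟩ := ENNReal.exists_pos_sum_of_countable' hε2 ι
  choose r hr1 hr2 using fun i => aux_rat_approx (hm i)
    (ENNReal.ne_top_of_tsum_ne_top hme i) (hτ i).ne'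
  have ht := ENNReal.tendsto_tsum_compl_atTop_zero hme
  obtain ⟨F, hF⟩ := ((tendsto_order.1 ht).2 _ (pos_iff_ne_zero.2 hε2)).exists
  refine ⟨Finsupp.onFinset F (fun i => if i ∈ F then r i else 0) (by intro a; aesop), ?_, ?_⟩
  · intro i
    simp only [Finsupp.onFinset_apply]
    split_ifs with h
    · exact hr1 i
    · simp
  · calc _ ≤ ∑' i, (τ i + Set.indicator {x | x ∉ F} (fun i => m i * e i) i) := by
          refine ENNReal.tsum_le_tsum fun i => ?_
          simp only [Finsupp.onFinset_apply]
          by_cases h : i ∈ F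
          · simpa [h] using hr2 i
          · simp [h]
      _ = ∑' i, τ i + ∑' i, Set.indicator {x | x ∉ F} (fun i => m i * e i) i := ENNReal.tsum_add
      _ ≤ ε / 2 + ε / 2 := by
          refine add_le_add hτs.le ?_
          rw [← tsum_subtype]
          exact hF.le
      _ = ε := ENNReal.add_halves ε

/-- completion of a sub-coupling `q` of `w, w'` to a coupling -/
def complete (w w' : ℕ → ℝ≥0∞) (q : ℕ → ℕ → ℝ≥0∞) (j k : ℕ) : ℝ≥0∞ :=
  q j k + (w j - ∑' k, q j k) * (w' k - ∑' j, q j k) / (1 - ∑' j, ∑' k, q j k)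

theorem complete_row {w w' : ℕ → ℝ≥0∞} {q : ℕ → ℕ → ℝ≥0∞} (hw : ∑' j, w j = 1)
    (hw' : ∑' j, w' j = 1) (h1 : ∀ j, ∑' k, q j k ≤ w j) (h2 : ∀ k, ∑' j, q j k ≤ w' k) (j : ℕ) :
    ∑' k, (w j - ∑' k, q j k) * (w' k - ∑' j, q j k) / (1 - ∑' j, ∑' k, q j k)
      = w j - ∑' k, q j k := by
  have hT : ∑' j, ∑' k, q j k ≤ 1 := hw ▸ ENNReal.tsum_le_tsum h1
  have hT' : ∑' k, ∑' j, q j k = ∑' j, ∑' k, q j k := ENNReal.tsum_comm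
  have hfin : ∑' j, ∑' k, q j k ≠ ∞ := (hT.trans_lt one_lt_top).ne
  have hs : ∑' k, (w' k - ∑' j, q j k) = 1 - ∑' j, ∑' k, q j k := by
    rw [ENNReal.tsum_sub (by rw [hT']; exact hfin) h2, hw', hT']
  simp only [div_eq_mul_inv]
  rw [ENNReal.tsum_mul_right, ENNReal.tsum_mul_left, hs]
  by_cases h : 1 - ∑' j, ∑' k, q j k = 0
  · have hz : w j - ∑' k, q j k = 0 := by
      have : ∑' j, (w j - ∑' k, q j k) = 0 := by
        rw [ENNReal.tsum_sub hfin h1, hw, h]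
      exact ENNReal.tsum_eq_zero.1 this j
    simp [hz]
  · rw [mul_assoc, ENNReal.mul_inv_cancel h (by simp), mul_one]

theorem complete_col {w w' : ℕ → ℝ≥0∞} {q : ℕ → ℕ → ℝ≥0∞} (hw : ∑' j, w j = 1)
    (hw' : ∑' j, w' j = 1) (h1 : ∀ j, ∑' k, q j k ≤ w j) (h2 : ∀ k, ∑' j, q j k ≤ w' k) (k : ℕ) :
    ∑' j, (w j - ∑' k, q j k) * (w' k - ∑' j, q j k) / (1 - ∑' j, ∑' k, q j k)
      = w' k - ∑' j, q j k := by
  have := complete_row (q := fun a b => q b a) hw' hw h2 h1 k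
  rw [ENNReal.tsum_comm] at this
  refine Eq.trans ?_ this
  congr 1; ext j
  rw [mul_comm]

theorem complete_cost {D : ℕ → ℕ → ℝ≥0∞} {E : ℕ → ℝ≥0∞} (hDE : ∀ j k, D j k ≤ E j + E k)
    {w w' : ℕ → ℝ≥0∞} {q m : ℕ → ℕ → ℝ≥0∞} (hw : ∑' j, w j = 1)
    (hw' : ∑' j, w' j = 1) (hm1 : ∀ j, ∑' k, m j k = w j) (hm2 : ∀ k, ∑' j, m j k = w' k)
    (hq : ∀ j k, q j k ≤ m j k) :
    ∑' j, ∑' k, D j k * complete w w' q j k ≤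
      ∑' j, ∑' k, D j k * m j k + ∑' j, ∑' k, (m j k - q j k) * (E j + E k) := by
  have h1 : ∀ j, ∑' k, q j k ≤ w j := fun j => hm1 j ▸ ENNReal.tsum_le_tsum (hq j)
  have h2 : ∀ k, ∑' j, q j k ≤ w' k := fun k => hm2 k ▸ ENNReal.tsum_le_tsum (fun j => hq j k)
  have hwf : ∀ j, w j ≠ ∞ := ENNReal.ne_top_of_tsum_ne_top (by simp [hw])
  have hwf' : ∀ j, w' j ≠ ∞ := ENNReal.ne_top_of_tsum_ne_top (by simp [hw'])
  have e1 : ∀ j, ∑' k, (m j k - q j k) = w j - ∑' k, q j k := fun j => by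
    rw [ENNReal.tsum_sub (ne_top_of_le_ne_top (hwf j) (h1 j)) (hq j), hm1]
  have e2 : ∀ k, ∑' j, (m j k - q j k) = w' k - ∑' j, q j k := fun k => by
    rw [ENNReal.tsum_sub (ne_top_of_le_ne_top (hwf' k) (h2 k)) (fun j => hq j k), hm2]
  set ρ : ℕ → ℕ → ℝ≥0∞ := fun j k =>
    (w j - ∑' k, q j k) * (w' k - ∑' j, q j k) / (1 - ∑' j, ∑' k, q j k) with hρ
  have r1 : ∀ j, ∑' k, ρ j k = w j - ∑' k, q j k := complete_row hw hw' h1 h2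
  have r2 : ∀ k, ∑' j, ρ j k = w' k - ∑' j, q j k := complete_col hw hw' h1 h2
  have key : ∀ f : ℕ → ℕ → ℝ≥0∞, ∑' j, ∑' k, f j k * (E j + E k) =
      ∑' j, (∑' k, f j k) * E j + ∑' k, (∑' j, f j k) * E k := fun f => by
    simp only [mul_add, ENNReal.tsum_add, ENNReal.tsum_mul_right]
    congr 1
    rw [ENNReal.tsum_comm]
    simp only [ENNReal.tsum_mul_right]
  calc _ ≤ ∑' j, ∑' k, (D j k * m j k + ρ j k * (E j + E k)) := by
        refine ENNReal.tsum_le_tsum fun j => ENNReal.tsum_le_tsum fun k => ?_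
        unfold complete
        rw [mul_add]
        refine add_le_add (by gcongr; exact hq j k) ?_
        rw [mul_comm]
        gcongr
        exact hDE j k
    _ = ∑' j, ∑' k, D j k * m j k + ∑' j, ∑' k, ρ j k * (E j + E k) := by
        simp only [ENNReal.tsum_add]
    _ = _ := by
        rw [key ρ, key (fun j k => m j k - q j k)]
        simp only [r1, r2, e1, e2]

/-- Measurable selection of nearly optimal discrete couplings. -/
theorem aux_discrete {D : ℕ → ℕ → ℝ≥0∞} {E : ℕ → ℝ≥0∞} (hDE : ∀ j k, D j k ≤ E j + E k)
    {Ω : Type*} [MeasurableSpace Ω] (w w' : Ω → ℕ → ℝ≥0∞)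
    (hwm : ∀ j, Measurable (fun ω => w ω j)) (hwm' : ∀ j, Measurable (fun ω => w' ω j))
    (hw : ∀ ω, ∑' j, w ω j = 1) (hw' : ∀ ω, ∑' j, w' ω j = 1) {ε : ℝ≥0∞} (hε : ε ≠ 0) :
    ∃ M : Ω → ℕ → ℕ → ℝ≥0∞, (∀ j k, Measurable (fun ω => M ω j k)) ∧
      (∀ ω j, ∑' k, M ω j k = w ω j) ∧ (∀ ω k, ∑' j, M ω j k = w' ω k) ∧
      ∀ ω, ∑' j, w ω j * E j ≠ ∞ → ∑' j, w' ω j * E j ≠ ∞ →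
        ∀ m : ℕ → ℕ → ℝ≥0∞, (∀ j, ∑' k, m j k = w ω j) → (∀ k, ∑' j, m j k = w' ω k) →
          ∑' j, ∑' k, D j k * M ω j k ≤ ∑' j, ∑' k, D j k * m j k + ε := by
  classical
  have hε2 : ε / 2 ≠ 0 := (ENNReal.half_pos hε).ne'
  obtain ⟨en, hen⟩ := exists_surjective_nat (ℕ × ℕ →₀ ℚ)
  set Q : ℕ → ℕ → ℕ → ℝ≥0∞ := fun n j k => ENNReal.ofReal (en n (j, k)) with hQ
  set V : ℕ → Set Ω := fun n => {ω | (∀ j, ∑' k, Q n j k ≤ w ω j) ∧ ∀ k, ∑' j, Q n j k ≤ w' ω k}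
    with hV
  have hVm : ∀ n, MeasurableSet (V n) := fun n => by
    have : V n = (⋂ j, {ω | ∑' k, Q n j k ≤ w ω j}) ∩ ⋂ k, {ω | ∑' j, Q n j k ≤ w' ω k} := by
      ext ω; simp [hV]
    rw [this]
    exact (MeasurableSet.iInter fun j => measurableSet_le measurable_const (hwm j)).inter
      (MeasurableSet.iInter fun j => measurableSet_le measurable_const (hwm' j))
  set N : ℕ → Ω → ℕ → ℕ → ℝ≥0∞ := fun n ω j k =>
    if ω ∈ V n then complete (w ω) (w' ω) (Q n) j k else complete (w ω) (w' ω) 0 j k with hN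
  have hcm : ∀ (q : ℕ → ℕ → ℝ≥0∞) j k, Measurable (fun ω => complete (w ω) (w' ω) q j k) := by
    intro q j k
    unfold complete
    have := hwm j
    have := hwm' k
    fun_prop
  have hNm : ∀ n j k, Measurable (fun ω => N n ω j k) := fun n j k =>
    Measurable.ite (hVm n) (hcm _ _ _) (hcm _ _ _)
  have hrow : ∀ n ω j, ∑' k, N n ω j k = w ω j := by
    intro n ω j
    simp only [hN]
    split_ifs with h
    · unfold complete
      rw [ENNReal.tsum_add, complete_row (hw ω) (hw' ω) h.1 h.2]
      exact add_tsub_cancel_of_le (h.1 j)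
    · unfold complete
      rw [ENNReal.tsum_add, complete_row (hw ω) (hw' ω) (by simp) (by simp)]
      simp
  have hcol : ∀ n ω k, ∑' j, N n ω j k = w' ω k := by
    intro n ω k
    simp only [hN]
    split_ifs with h
    · unfold complete
      rw [ENNReal.tsum_add, complete_col (hw ω) (hw' ω) h.1 h.2]
      exact add_tsub_cancel_of_le (h.2 k)
    · unfold complete
      rw [ENNReal.tsum_add, complete_col (hw ω) (hw' ω) (by simp) (by simp)]
      simp
  set c : ℕ → Ω → ℝ≥0∞ := fun n ω => ∑' j, ∑' k, D j k * N n ω j k with hc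
  have hcmeas : ∀ n, Measurable (c n) := fun n =>
    Measurable.tsum fun j => Measurable.tsum fun k => (hNm n j k).const_mul _
  have hex : ∀ ω, ∃ n, c n ω ≤ (⨅ n, c n ω) + ε / 2 := by
    intro ω
    by_cases ht : (⨅ n, c n ω) = ∞
    · exact ⟨0, by simp [ht]⟩
    · obtain ⟨n, hn⟩ := iInf_lt_iff.1 (ENNReal.lt_add_right ht hε2)
      exact ⟨n, hn.le⟩
  refine ⟨fun ω => N (Nat.find (hex ω)) ω, ?_, fun ω j => hrow _ ω j, fun ω k => hcol _ ω k, ?_⟩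
  · intro j k
    exact Measurable.find (f := fun n ω => N n ω j k) (fun n => hNm n j k)
      (fun n => measurableSet_le (hcmeas n) ((Measurable.iInf hcmeas).add_const _)) hex
  · intro ω hE hE' m hm1 hm2
    have hmf : ∀ i : ℕ × ℕ, m i.1 i.2 ≠ ∞ := fun i =>
      ne_top_of_le_ne_top (ENNReal.ne_top_of_tsum_ne_top (by simp [hw ω]) i.1)
        ((ENNReal.le_tsum i.2).trans (hm1 i.1).le)
    have hfin : ∑' i : ℕ × ℕ, m i.1 i.2 * (E i.1 + E i.2) ≠ ∞ := by
      rw [ENNReal.tsum_prod (f := fun j k => m j k * (E j + E k))]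
      simp only [mul_add, ENNReal.tsum_add, ENNReal.tsum_mul_right, hm1]
      rw [ENNReal.tsum_comm]
      simp only [ENNReal.tsum_mul_right, hm2]
      exact ENNReal.add_ne_top.2 ⟨hE, hE'⟩
    obtain ⟨q, hq1, hq2⟩ := aux_finsupp_approx (fun i : ℕ × ℕ => m i.1 i.2)
      (fun i => E i.1 + E i.2) hmf hfin hε2
    obtain ⟨n, rfl⟩ := hen q
    have hqm : ∀ j k, Q n j k ≤ m j k := fun j k => hq1 (j, k)
    have hmem : ω ∈ V n := ⟨fun j => hm1 j ▸ ENNReal.tsum_le_tsum (hqm j),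
      fun k => hm2 k ▸ ENNReal.tsum_le_tsum (fun j => hqm j k)⟩
    have hcn : c n ω ≤ ∑' j, ∑' k, D j k * m j k + ε / 2 := by
      have := complete_cost hDE (hw ω) (hw' ω) hm1 hm2 hqm
      simp only [hc, hN, hmem, if_true]
      refine this.trans ?_
      gcongr
      rw [← ENNReal.tsum_prod (f := fun j k => (m j k - Q n j k) * (E j + E k))]
      exact hq2
    calc c (Nat.find (hex ω)) ω ≤ (⨅ n, c n ω) + ε / 2 := Nat.find_spec (hex ω)
      _ ≤ c n ω + ε / 2 := by gcongr; exact iInf_le _ n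
      _ ≤ (∑' j, ∑' k, D j k * m j k + ε / 2) + ε / 2 := by gcongr
      _ = _ := by rw [add_assoc, ENNReal.add_halves]

theorem aux_two_pow {p : ℝ} (hp : 1 ≤ p) (x y : ℝ≥0∞) :
    (x + y) ^ p ≤ 2 ^ p * (x ^ p + y ^ p) := by
  refine (ENNReal.rpow_add_le_mul_rpow_add_rpow x y hp).trans ?_
  gcongr
  · norm_num
  · linarith

theorem aux_lint_nat {X ι : Type*} [MeasurableSpace X] [Countable ι] [MeasurableSpace ι]
    [MeasurableSingletonClass ι] (μ : Measure X) {c : X → ι}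
    (hc : Measurable c) (f : ι → ℝ≥0∞) : ∫⁻ x, f (c x) ∂μ = ∑' j, f j * μ (c ⁻¹' {j}) := by
  have hf : Measurable f := measurable_of_countable f
  rw [← lintegral_map hf hc, lintegral_countable']
  congr 1; ext j
  rw [Measure.map_apply hc (measurableSet_singleton j)]

theorem aux_measure_split {X : Type*} [MeasurableSpace X] (μ : Measure X) {c : X → ℕ}
    (hc : Measurable c) {s : Set X} (hs : MeasurableSet s) :
    ∑' k, μ (s ∩ c ⁻¹' {k}) = μ s := by
  rw [← measure_iUnion]
  · congr 1; ext x; simp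
  · intro i j hij
    refine Set.disjoint_left.2 ?_
    rintro x ⟨_, hi⟩ ⟨_, hj⟩
    exact hij (by simp_all)
  · intro i; exact hs.inter (hc (measurableSet_singleton i))

theorem aux_density_fst {B : Type*} [MeasurableSpace B] (μ ν : Measure B) [IsProbabilityMeasure μ]
    [IsProbabilityMeasure ν] {c : B → ℕ} (hc : Measurable c) (M : ℕ → ℕ → ℝ≥0∞)
    (h1 : ∀ j, ∑' k, M j k = μ (c ⁻¹' {j})) (h2 : ∀ k, ∑' j, M j k = ν (c ⁻¹' {k})) :
    ((μ.prod ν).withDensity (fun z => M (c z.1) (c z.2) /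
      (μ (c ⁻¹' {c z.1}) * ν (c ⁻¹' {c z.2})))).map Prod.fst = μ := by
  set F : ℕ → ℕ → ℝ≥0∞ := fun j k => M j k / (μ (c ⁻¹' {j}) * ν (c ⁻¹' {k})) with hF
  have hFm : Measurable (fun z : B × B => F (c z.1) (c z.2)) :=
    (measurable_of_countable (fun n : ℕ × ℕ => F n.1 n.2)).comp
      (g := fun n : ℕ × ℕ => F n.1 n.2) (f := fun z : B × B => (c z.1, c z.2)) (by fun_prop)
  have hae : ∀ᵐ x ∂μ, μ (c ⁻¹' {c x}) ≠ 0 := by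
    have : {x | ¬ μ (c ⁻¹' {c x}) ≠ 0} ⊆ ⋃ j ∈ {j | μ (c ⁻¹' {j}) = 0}, c ⁻¹' {j} := by
      intro x hx
      simp only [Set.mem_iUnion]
      exact ⟨c x, by simpa using hx, rfl⟩
    refine measure_mono_null this ?_
    refine (measure_biUnion_null_iff (Set.to_countable _)).2 fun j hj => hj
  have hin : ∀ x, μ (c ⁻¹' {c x}) ≠ 0 → ∫⁻ y, F (c x) (c y) ∂ν = 1 := by
    intro x hx
    rw [aux_lint_nat ν hc (F (c x))]
    have : ∀ k, F (c x) k * ν (c ⁻¹' {k}) = M (c x) k / μ (c ⁻¹' {c x}) := by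
      intro k
      by_cases hk : ν (c ⁻¹' {k}) = 0
      · have hM : M (c x) k = 0 := by
          have := h2 k
          rw [hk] at this
          exact ENNReal.tsum_eq_zero.1 this _
        simp [hF, hM]
      · simp only [hF]
        rw [div_eq_mul_inv, ENNReal.mul_inv (Or.inl hx) (Or.inl (measure_ne_top _ _)), mul_assoc,
          mul_assoc, ENNReal.inv_mul_cancel hk (measure_ne_top _ _), mul_one, div_eq_mul_inv]
    simp only [this, div_eq_mul_inv]
    rw [ENNReal.tsum_mul_right, h1, ENNReal.mul_inv_cancel hx (measure_ne_top _ _)]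
  ext s hs
  rw [Measure.map_apply measurable_fst hs, withDensity_apply _ (measurable_fst hs),
    ← lintegral_indicator (measurable_fst hs)]
  have hm2 : Measurable ((Prod.fst ⁻¹' s).indicator (fun z : B × B => F (c z.1) (c z.2))) :=
    hFm.indicator (measurable_fst hs)
  refine (lintegral_prod _ hm2.aemeasurable).trans ?_
  rw [← lintegral_indicator_one hs]
  refine lintegral_congr_ae ?_
  filter_upwards [hae] with x hx
  by_cases hxs : x ∈ s
  · simpa [Set.indicator, hxs] using hin x hx
  · simp [Set.indicator, hxs]

theorem aux_density_snd {B : Type*} [MeasurableSpace B] (μ ν : Measure B) [IsProbabilityMeasure μ]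
    [IsProbabilityMeasure ν] {c : B → ℕ} (hc : Measurable c) (M : ℕ → ℕ → ℝ≥0∞)
    (h1 : ∀ j, ∑' k, M j k = μ (c ⁻¹' {j})) (h2 : ∀ k, ∑' j, M j k = ν (c ⁻¹' {k})) :
    ((μ.prod ν).withDensity (fun z => M (c z.1) (c z.2) /
      (μ (c ⁻¹' {c z.1}) * ν (c ⁻¹' {c z.2})))).map Prod.snd = ν := by
  have h := aux_density_fst ν μ hc (fun j k => M k j) h2 h1
  conv_rhs => rw [← h]
  set F : ℕ → ℕ → ℝ≥0∞ := fun j k => M j k / (μ (c ⁻¹' {j}) * ν (c ⁻¹' {k})) with hF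
  have hFm : Measurable (fun z : B × B => F (c z.1) (c z.2)) :=
    (measurable_of_countable (fun n : ℕ × ℕ => F n.1 n.2)).comp
      (g := fun n : ℕ × ℕ => F n.1 n.2) (f := fun z : B × B => (c z.1, c z.2)) (by fun_prop)
  ext s hs
  rw [Measure.map_apply measurable_fst hs, withDensity_apply _ (measurable_fst hs),
    Measure.map_apply measurable_snd hs, withDensity_apply _ (measurable_snd hs),
    ← Measure.prod_swap, setLIntegral_map (measurable_snd hs) hFm measurable_swap]
  refine lintegral_congr fun z => ?_
  simp [hF, mul_comm]

/-- Measurable selection of nearly optimal couplings (up to a multiplicative constant). -/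
theorem aux_kernel_coupling {Ω B : Type*} [MeasurableSpace Ω] [MetricSpace B]
    [SecondCountableTopology B] [MeasurableSpace B] [BorelSpace B] [Nonempty B]
    {p : ℝ} (hp : 1 ≤ p) (κ κ' : Kernel Ω B) [IsMarkovKernel κ] [IsMarkovKernel κ']
    {ε : ℝ≥0∞} (hε : ε ≠ 0) :
    ∃ Q : Kernel Ω (B × B), IsMarkovKernel Q ∧ (∀ ω, (Q ω).map Prod.fst = κ ω) ∧
      (∀ ω, (Q ω).map Prod.snd = κ' ω) ∧
      ∀ ω, MemPp p edist (κ ω) → MemPp p edist (κ' ω) →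
        ∫⁻ z, edist z.1 z.2 ^ p ∂(Q ω) ≤ 2 ^ p * Wp p edist (κ ω) (κ' ω) ^ p + ε := by
  classical
  have hp0 : 0 < p := by linarith
  have hε2 : ε / 2 ≠ 0 := (ENNReal.half_pos hε).ne'
  obtain ⟨η, hη0, hηt, hη⟩ : ∃ η : ℝ≥0∞, η ≠ 0 ∧ η ≠ ∞ ∧ 2 ^ p * (4 * η) ^ p ≤ ε / 2 := by
    refine ⟨(min (ε / 2) 1) ^ (1 / p) / 8, ?_, ?_, ?_⟩
    · have : (min (ε / 2) 1) ≠ 0 := (lt_min (pos_iff_ne_zero.2 hε2) one_pos).ne'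
      refine (ENNReal.div_pos ?_ (by norm_num)).ne'
      intro h
      rw [ENNReal.rpow_eq_zero_iff_of_pos (by positivity)] at h
      exact this h
    · refine ENNReal.div_ne_top ?_ (by norm_num)
      refine ENNReal.rpow_ne_top_of_nonneg (by positivity) ?_
      exact (lt_of_le_of_lt (min_le_right _ _) one_lt_top).ne
    · rw [← ENNReal.mul_rpow_of_nonneg _ _ hp0.le]
      have : (2 : ℝ≥0∞) * (4 * ((min (ε / 2) 1) ^ (1 / p) / 8)) = (min (ε / 2) 1) ^ (1 / p) := by
        rw [← mul_assoc]
        norm_num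
        exact ENNReal.mul_div_cancel (by norm_num) (by norm_num)
      rw [this, ← ENNReal.rpow_mul, one_div_mul_cancel hp0.ne', ENNReal.rpow_one]
      exact min_le_left _ _
  set b : ℕ → B := TopologicalSpace.denseSeq B with hb
  have hex : ∀ x : B, ∃ n, edist (b n) x < η := by
    intro x
    obtain ⟨n, hn⟩ := (TopologicalSpace.denseRange_denseSeq B).exists_mem_open
      (Metric.isOpen_eball (x := x) (ε := η)) ⟨x, Metric.mem_eball_self (pos_iff_ne_zero.2 hη0)⟩
    exact ⟨n, hn⟩
  set c : B → ℕ := fun x => Nat.find (hex x) with hcdef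
  have hc : Measurable c := measurable_find hex fun k =>
    measurableSet_lt (measurable_const.edist measurable_id) measurable_const
  have hcb : ∀ x, edist (b (c x)) x ≤ η := fun x => (Nat.find_spec (hex x)).le
  set D : ℕ → ℕ → ℝ≥0∞ := fun j k => (edist (b j) (b k) + 2 * η) ^ p with hD
  set E : ℕ → ℝ≥0∞ := fun j => 2 ^ p * (edist (b 0) (b j) + η) ^ p with hE
  have hDE : ∀ j k, D j k ≤ E j + E k := by
    intro j k
    simp only [hD, hE]
    rw [← mul_add]
    refine le_trans ?_ (aux_two_pow hp _ _)
    refine ENNReal.rpow_le_rpow ?_ hp0.le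
    calc edist (b j) (b k) + 2 * η ≤ (edist (b j) (b 0) + edist (b 0) (b k)) + 2 * η := by
          gcongr; exact edist_triangle _ _ _
      _ = (edist (b 0) (b j) + η) + (edist (b 0) (b k) + η) := by
          rw [edist_comm (b j) (b 0)]; ring
  have hD1 : ∀ x y, edist x y ^ p ≤ D (c x) (c y) := by
    intro x y
    simp only [hD]
    gcongr
    calc edist x y ≤ edist x (b (c x)) + edist (b (c x)) (b (c y)) + edist (b (c y)) y :=
          edist_triangle4 _ _ _ _
      _ ≤ η + edist (b (c x)) (b (c y)) + η := by
          gcongr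
          · rw [edist_comm]; exact hcb x
          · exact hcb y
      _ = _ := by ring
  have hD2 : ∀ x y, D (c x) (c y) ≤ 2 ^ p * edist x y ^ p + ε / 2 := by
    intro x y
    simp only [hD]
    calc (edist (b (c x)) (b (c y)) + 2 * η) ^ p
        ≤ ((η + edist x y + η) + 2 * η) ^ p := by
          gcongr
          refine (edist_triangle4 _ x y _).trans ?_
          gcongr
          · exact hcb x
          · rw [edist_comm]; exact hcb y
      _ = (edist x y + 4 * η) ^ p := by congr 1; ring
      _ ≤ 2 ^ p * (edist x y ^ p + (4 * η) ^ p) := aux_two_pow hp _ _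
      _ ≤ _ := by rw [mul_add]; gcongr
  have hE2 : ∀ x0 x, E (c x) ≤ 2 ^ p * (2 ^ p * (edist x0 x ^ p + (edist (b 0) x0 + 2 * η) ^ p)) := by
    intro x0 x
    simp only [hE]
    refine mul_le_mul_right ?_ _
    refine le_trans ?_ (aux_two_pow hp _ _)
    refine ENNReal.rpow_le_rpow ?_ hp0.le
    calc edist (b 0) (b (c x)) + η ≤ (edist (b 0) x0 + edist x0 x + edist x (b (c x))) + η := by
          gcongr; exact edist_triangle4 _ _ _ _
      _ ≤ (edist (b 0) x0 + edist x0 x + η) + η := by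
          gcongr; rw [edist_comm]; exact hcb x
      _ = edist x0 x + (edist (b 0) x0 + 2 * η) := by ring
  have hEfin : ∀ μ : Measure B, MemPp p edist μ → ∑' j, μ (c ⁻¹' {j}) * E j ≠ ∞ := by
    rintro μ ⟨hμ, x0, hx0⟩
    have : ∑' j, μ (c ⁻¹' {j}) * E j = ∫⁻ x, E (c x) ∂μ := by
      rw [aux_lint_nat μ hc]; simp only [mul_comm]
    rw [this]
    have h2p : (2 : ℝ≥0∞) ^ p ≠ ∞ := ENNReal.rpow_ne_top_of_nonneg hp0.le (by norm_num)
    refine ne_top_of_le_ne_top ?_ (lintegral_mono (hE2 x0))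
    rw [lintegral_const_mul' _ _ h2p, lintegral_const_mul' _ _ h2p,
      lintegral_add_right _ measurable_const, lintegral_const]
    refine ENNReal.mul_ne_top h2p (ENNReal.mul_ne_top h2p (ENNReal.add_ne_top.2 ⟨hx0, ?_⟩))
    simp only [measure_univ, mul_one]
    refine ENNReal.rpow_ne_top_of_nonneg hp0.le ?_
    exact ENNReal.add_ne_top.2 ⟨edist_ne_top _ _, ENNReal.mul_ne_top (by norm_num) hηt⟩
  have hsing : ∀ j, MeasurableSet (c ⁻¹' {j}) := fun j => hc (measurableSet_singleton j)
  have hsum : ∀ μ : Measure B, IsProbabilityMeasure μ → ∑' j, μ (c ⁻¹' {j}) = 1 := by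
    intro μ hμ
    have := aux_measure_split μ hc MeasurableSet.univ
    simpa using this
  obtain ⟨M, hMm, hM1, hM2, hMopt⟩ := aux_discrete hDE (fun ω j => κ ω (c ⁻¹' {j}))
    (fun ω j => κ' ω (c ⁻¹' {j})) (fun j => Kernel.measurable_coe κ (hsing j))
    (fun j => Kernel.measurable_coe κ' (hsing j)) (fun ω => hsum _ inferInstance)
    (fun ω => hsum _ inferInstance) hε2
  set f : Ω → B × B → ℝ≥0∞ := fun ω z => M ω (c z.1) (c z.2) /
      (κ ω (c ⁻¹' {c z.1}) * κ' ω (c ⁻¹' {c z.2})) with hfdef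
  have hf : Measurable (Function.uncurry f) := by
    have h1 : Measurable (fun t : Ω × (ℕ × ℕ) => M t.1 t.2.1 t.2.2 /
        (κ t.1 (c ⁻¹' {t.2.1}) * κ' t.1 (c ⁻¹' {t.2.2}))) := by
      refine measurable_from_prod_countable_left fun n => ?_
      exact (hMm n.1 n.2).div ((Kernel.measurable_coe κ (hsing n.1)).mul
        (Kernel.measurable_coe κ' (hsing n.2)))
    exact h1.comp (f := fun t : Ω × (B × B) => (t.1, (c t.2.1, c t.2.2))) (by fun_prop)
  set Q : Kernel Ω (B × B) := Kernel.withDensity (κ ×ₖ κ') f with hQ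
  have hQa : ∀ ω, Q ω = ((κ ω).prod (κ' ω)).withDensity (f ω) := by
    intro ω
    rw [hQ, Kernel.withDensity_apply _ hf, Kernel.prod_apply]
  have hQ1 : ∀ ω, (Q ω).map Prod.fst = κ ω := fun ω => by
    rw [hQa]
    exact aux_density_fst (κ ω) (κ' ω) hc (M ω) (hM1 ω) (hM2 ω)
  have hQ2 : ∀ ω, (Q ω).map Prod.snd = κ' ω := fun ω => by
    rw [hQa]
    exact aux_density_snd (κ ω) (κ' ω) hc (M ω) (hM1 ω) (hM2 ω)
  refine ⟨Q, ⟨fun ω => ⟨?_⟩⟩, hQ1, hQ2, ?_⟩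
  · have : (Q ω) Set.univ = ((Q ω).map Prod.fst) Set.univ := by
      rw [Measure.map_apply measurable_fst MeasurableSet.univ, Set.preimage_univ]
    rw [this, hQ1]; exact measure_univ
  intro ω hω hω'
  have hpm : Measurable (fun z : B × B => (c z.1, c z.2)) := by fun_prop
  have hpre : ∀ j k, (fun z : B × B => (c z.1, c z.2)) ⁻¹' {(j, k)} =
      (c ⁻¹' {j}) ×ˢ (c ⁻¹' {k}) := fun j k => by ext z; simp
  have hpair : ∀ (π : Measure (B × B)) (F : ℕ → ℕ → ℝ≥0∞), ∫⁻ z, F (c z.1) (c z.2) ∂π =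
      ∑' j, ∑' k, F j k * π ((c ⁻¹' {j}) ×ˢ (c ⁻¹' {k})) := by
    intro π F
    have := aux_lint_nat π hpm (fun n : ℕ × ℕ => F n.1 n.2)
    rw [this, ← ENNReal.tsum_prod (f := fun j k => F j k * π ((c ⁻¹' {j}) ×ˢ (c ⁻¹' {k})))]
    congr 1; ext n
    rw [← hpre]
  have hcost : ∫⁻ z, edist z.1 z.2 ^ p ∂(Q ω) ≤ ∑' j, ∑' k, D j k * M ω j k := by
    have hDm : Measurable (fun z : B × B => D (c z.1) (c z.2)) :=
      (measurable_of_countable (fun n : ℕ × ℕ => D n.1 n.2)).comp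
        (g := fun n : ℕ × ℕ => D n.1 n.2) hpm
    calc _ ≤ ∫⁻ z, D (c z.1) (c z.2) ∂(Q ω) := lintegral_mono fun z => hD1 _ _
      _ = ∫⁻ z, f ω z * D (c z.1) (c z.2) ∂((κ ω).prod (κ' ω)) := by
          rw [hQa, lintegral_withDensity_eq_lintegral_mul _ (show Measurable (f ω) from
            hf.comp measurable_prodMk_left) hDm]
          rfl
      _ = ∑' j, ∑' k, (M ω j k / (κ ω (c ⁻¹' {j}) * κ' ω (c ⁻¹' {k})) * D j k) *
            ((κ ω).prod (κ' ω)) ((c ⁻¹' {j}) ×ˢ (c ⁻¹' {k})) :=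
          hpair _ (fun j k => M ω j k / (κ ω (c ⁻¹' {j}) * κ' ω (c ⁻¹' {k})) * D j k)
      _ ≤ _ := by
          refine ENNReal.tsum_le_tsum fun j => ENNReal.tsum_le_tsum fun k => ?_
          rw [Measure.prod_prod]
          calc _ = D j k * (M ω j k / (κ ω (c ⁻¹' {j}) * κ' ω (c ⁻¹' {k})) *
                (κ ω (c ⁻¹' {j}) * κ' ω (c ⁻¹' {k}))) := by ring
            _ ≤ _ := by gcongr; exact ENNReal.mul_le_of_le_div le_rfl
  have hall : ∀ π ∈ Cpl (κ ω) (κ' ω), ∫⁻ z, edist z.1 z.2 ^ p ∂(Q ω) ≤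
      2 ^ p * ∫⁻ z, edist z.1 z.2 ^ p ∂π + ε := by
    rintro π ⟨hπ1, hπ2⟩
    have : IsProbabilityMeasure π := ⟨by
      have : π Set.univ = (π.map Prod.fst) Set.univ := by
        rw [Measure.map_apply measurable_fst MeasurableSet.univ, Set.preimage_univ]
      rw [this, hπ1]; exact measure_univ⟩
    have h1 := hMopt ω (hEfin _ hω) (hEfin _ hω') (fun j k => π ((c ⁻¹' {j}) ×ˢ (c ⁻¹' {k})))
      (fun j => by
        rw [← hπ1, Measure.map_apply measurable_fst (hsing j),
          ← aux_measure_split π (hc.comp measurable_snd) (measurable_fst (hsing j))]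
        rfl)
      (fun k => by
        rw [← hπ2, Measure.map_apply measurable_snd (hsing k),
          ← aux_measure_split π (hc.comp measurable_fst) (measurable_snd (hsing k))]
        congr 1; ext j; congr 1; ext z; simp [and_comm])
    rw [← hpair π D] at h1
    calc _ ≤ _ := hcost
      _ ≤ _ := h1
      _ ≤ ∫⁻ z, (2 ^ p * edist z.1 z.2 ^ p + ε / 2) ∂π + ε / 2 := by
          gcongr with z; exact hD2 _ _
      _ = _ := by
          rw [lintegral_add_right _ measurable_const, lintegral_const, measure_univ, mul_one,
            lintegral_const_mul' _ _ (ENNReal.rpow_ne_top_of_nonneg hp0.le (by norm_num)),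
            add_assoc, ENNReal.add_halves]
  have h2p : (2 : ℝ≥0∞) ^ p ≠ ∞ := ENNReal.rpow_ne_top_of_nonneg hp0.le (by norm_num)
  have h2p0 : (2 : ℝ≥0∞) ^ p ≠ 0 := by simp [hp0]
  set K := ∫⁻ z, edist z.1 z.2 ^ p ∂(Q ω) with hK
  have hW : ((K - ε) / 2 ^ p) ^ (1 / p) ≤ Wp p edist (κ ω) (κ' ω) := by
    refine le_iInf₂ fun π hπ => ?_
    gcongr
    rw [ENNReal.div_le_iff h2p0 h2p, tsub_le_iff_right, mul_comm]
    exact hall π hπ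
  have hW2 : (K - ε) / 2 ^ p ≤ Wp p edist (κ ω) (κ' ω) ^ p := by
    calc (K - ε) / 2 ^ p = (((K - ε) / 2 ^ p) ^ (1 / p)) ^ p := by
          rw [← ENNReal.rpow_mul, one_div_mul_cancel hp0.ne', ENNReal.rpow_one]
      _ ≤ _ := by gcongr
  rw [ENNReal.div_le_iff h2p0 h2p, tsub_le_iff_right, mul_comm] at hW2
  exact hW2

theorem aux_small_mul {C ε : ℝ≥0∞} (hC : C ≠ ∞) (hε : ε ≠ 0) : ∃ τ : ℝ≥0∞, τ ≠ 0 ∧ C * τ ≤ ε := by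
  refine ⟨ε / (C + 1), ?_, ?_⟩
  · exact (ENNReal.div_pos hε (by simp [hC])).ne'
  · calc C * (ε / (C + 1)) ≤ (C + 1) * (ε / (C + 1)) := by gcongr; exact le_self_add
      _ ≤ ε := by rw [mul_comm]; exact ENNReal.mul_le_of_le_div le_rfl

theorem aux_small_pow {p : ℝ} (hp : 1 ≤ p) {ε : ℝ≥0∞} (hε : ε ≠ 0) :
    ∃ ρ : ℝ≥0∞, ρ ≠ 0 ∧ ρ ^ p ≤ ε := by
  have hp0 : 0 < p := by linarith
  refine ⟨ε ^ (1 / p), ?_, ?_⟩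
  · intro h
    rw [ENNReal.rpow_eq_zero_iff_of_pos (by positivity)] at h
    exact hε h
  · rw [← ENNReal.rpow_mul, one_div_mul_cancel hp0.ne', ENNReal.rpow_one]

/-- A weak form of Lusin's theorem. -/
theorem aux_lusin {Z Y : Type*} [MetricSpace Z] [CompleteSpace Z] [SecondCountableTopology Z]
    [MeasurableSpace Z] [BorelSpace Z] [MetricSpace Y] [SecondCountableTopology Y]
    [MeasurableSpace Y] [BorelSpace Y] [Nonempty Y]
    (m : Measure Z) [IsProbabilityMeasure m] {G : Z → Y} (hG : Measurable G)
    {ρ τ : ℝ≥0∞} (hρ : ρ ≠ 0) (hτ : τ ≠ 0) :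
    ∃ r : ℝ≥0∞, r ≠ 0 ∧ r ≠ ∞ ∧ ∃ K : Set Z, MeasurableSet K ∧ m Kᶜ ≤ τ ∧
      ∀ z ∈ K, ∀ z' ∈ K, edist z z' < r → edist (G z) (G z') ≤ ρ := by
  classical
  have hρ2 : 0 < ρ / 2 := ENNReal.half_pos hρ
  have hτ2 : 0 < τ / 2 := ENNReal.half_pos hτ
  set b : ℕ → Y := TopologicalSpace.denseSeq Y with hb
  have hex : ∀ x : Y, ∃ n, edist (b n) x < ρ / 2 := by
    intro x
    obtain ⟨n, hn⟩ := (TopologicalSpace.denseRange_denseSeq Y).exists_mem_open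
      (Metric.isOpen_eball (x := x) (ε := ρ / 2)) ⟨x, Metric.mem_eball_self hρ2⟩
    exact ⟨n, hn⟩
  set c : Y → ℕ := fun x => Nat.find (hex x) with hcdef
  have hc : Measurable c := measurable_find hex fun k =>
    measurableSet_lt (measurable_const.edist measurable_id) measurable_const
  have hcb : ∀ x, edist (b (c x)) x ≤ ρ / 2 := fun x => (Nat.find_spec (hex x)).le
  set n : Z → ℕ := fun z => c (G z) with hn
  have hnm : Measurable n := hc.comp hG
  have hcell : ∀ z z', n z = n z' → edist (G z) (G z') ≤ ρ := by
    intro z z' h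
    calc edist (G z) (G z') ≤ edist (G z) (b (n z)) + edist (b (n z)) (G z') := edist_triangle _ _ _
      _ ≤ ρ / 2 + ρ / 2 := by
          gcongr
          · rw [edist_comm]; exact hcb _
          · rw [h]; exact hcb _
      _ = ρ := ENNReal.add_halves _
  obtain ⟨N, hN⟩ : ∃ N, m {z | N ≤ n z} ≤ τ / 2 := by
    have h1 : Tendsto (m ∘ fun N => {z | N ≤ n z}) atTop (𝓝 (m (⋂ N, {z | N ≤ n z}))) := by
      refine tendsto_measure_iInter_atTop
        (fun N => (measurableSet_le measurable_const hnm).nullMeasurableSet) ?_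
        ⟨0, measure_ne_top _ _⟩
      intro i j hij z hz
      exact le_trans hij hz
    have h2 : (⋂ N, {z | N ≤ n z}) = ∅ := by
      ext z
      simp only [Set.mem_iInter, Set.mem_ofPred_eq, Set.mem_empty_iff_false, iff_false, not_forall]
      exact ⟨n z + 1, by omega⟩
    rw [h2, measure_empty] at h1
    obtain ⟨N, hN⟩ := (h1.eventually (gt_mem_nhds hτ2)).exists
    exact ⟨N, hN.le⟩
  obtain ⟨δ, hδ0, hδ⟩ := ENNReal.exists_pos_sum_of_countable' hτ2.ne' ℕ
  have hcomp : ∀ i, ∃ C ⊆ n ⁻¹' {i}, IsCompact C ∧ m (n ⁻¹' {i} \ C) < δ i := fun i =>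
    (hnm (measurableSet_singleton i)).exists_isCompact_sdiff_lt (measure_ne_top _ _) (hδ0 i).ne'
  choose C hCs hCc hCm using hcomp
  have hr : ∃ r : NNReal, 0 < r ∧ ∀ i ∈ Finset.range N, ∀ j ∈ Finset.range N, i ≠ j →
      ∀ z ∈ C i, ∀ z' ∈ C j, (r : ℝ≥0∞) < edist z z' := by
    have : ∀ᶠ r : NNReal in 𝓝[>] 0, ∀ i ∈ Finset.range N, ∀ j ∈ Finset.range N, i ≠ j →
        ∀ z ∈ C i, ∀ z' ∈ C j, (r : ℝ≥0∞) < edist z z' := by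
      rw [Filter.eventually_all_finset]
      intro i _
      rw [Filter.eventually_all_finset]
      intro j _
      by_cases hij : i = j
      · exact Eventually.of_forall fun r h => (h hij).elim
      · have hd : Disjoint (C i) (C j) := by
          rw [Set.disjoint_left]
          intro z hz hz'
          exact hij ((hCs i hz : n z = i).symm.trans (hCs j hz'))
        obtain ⟨r, hr, h⟩ := Metric.exists_pos_forall_lt_edist (hCc i) (hCc j).isClosed hd
        filter_upwards [Ioo_mem_nhdsGT hr] with s hs _ z hz z' hz'
        exact lt_trans (by exact_mod_cast hs.2) (h z hz z' hz')
    obtain ⟨r, hr, hr0⟩ := (this.and self_mem_nhdsWithin).exists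
    exact ⟨r, hr0, hr⟩
  obtain ⟨r, hr0, hr⟩ := hr
  refine ⟨r, by exact_mod_cast hr0.ne', ENNReal.coe_ne_top, ⋃ i ∈ Finset.range N, C i, ?_, ?_, ?_⟩
  · exact Finset.measurableSet_biUnion _ fun i _ => (hCc i).measurableSet
  · have hsub : (⋃ i ∈ Finset.range N, C i)ᶜ ⊆ {z | N ≤ n z} ∪ ⋃ i, (n ⁻¹' {i} \ C i) := by
      intro z hz
      by_cases h : N ≤ n z
      · exact Or.inl h
      · refine Or.inr (Set.mem_iUnion.2 ⟨n z, rfl, fun hzC => hz ?_⟩)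
        exact Set.mem_biUnion (Finset.mem_coe.2 (Finset.mem_range.2 (not_le.1 h))) hzC
    calc m _ ≤ m {z | N ≤ n z} + m (⋃ i, (n ⁻¹' {i} \ C i)) :=
          (measure_mono hsub).trans (measure_union_le _ _)
      _ ≤ τ / 2 + ∑' i, δ i := by
          gcongr
          exact (measure_iUnion_le _).trans (ENNReal.tsum_le_tsum fun i => (hCm i).le)
      _ ≤ τ / 2 + τ / 2 := by gcongr
      _ = τ := ENNReal.add_halves _
  · intro z hz z' hz' hlt
    simp only [Set.mem_iUnion] at hz hz'
    obtain ⟨i, hi, hz⟩ := hz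
    obtain ⟨j, hj, hz'⟩ := hz'
    by_cases hij : i = j
    · refine hcell z z' ?_
      rw [(hCs i hz : n z = i), (hCs j hz' : n z' = j), hij]
    · exact absurd hlt (hr i hi j hj hij z hz z' hz').le.not_gt

/-- Uniform continuity, in the `L^p` sense, of a fixed `L^p` map along self-couplings. -/
theorem aux_uniform {Z Y : Type*} [MetricSpace Z] [CompleteSpace Z] [SecondCountableTopology Z]
    [MeasurableSpace Z] [BorelSpace Z] [MetricSpace Y] [SecondCountableTopology Y]
    [MeasurableSpace Y] [BorelSpace Y] [Nonempty Y] {p : ℝ} (hp : 1 ≤ p)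
    (m : Measure Z) [IsProbabilityMeasure m] {G : Z → Y} (hG : Measurable G)
    {y₀ : Y} (hy : ∫⁻ z, edist y₀ (G z) ^ p ∂m ≠ ∞) {ε : ℝ≥0∞} (hε : ε ≠ 0) :
    ∃ η : ℝ≥0∞, η ≠ 0 ∧ ∀ Λ : Measure (Z × Z), Λ.map Prod.fst = m → Λ.map Prod.snd = m →
      ∫⁻ t, edist t.1 t.2 ^ p ∂Λ ≤ η → ∫⁻ t, edist (G t.1) (G t.2) ^ p ∂Λ ≤ ε := by
  have hp0 : 0 < p := by linarith
  have hε2 : ε / 2 ≠ 0 := (ENNReal.half_pos hε).ne'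
  have hε4 : ε / 2 / 2 ≠ 0 := (ENNReal.half_pos hε2).ne'
  have h2p : (2 : ℝ≥0∞) ^ p ≠ ∞ := ENNReal.rpow_ne_top_of_nonneg hp0.le (by norm_num)
  obtain ⟨ρ, hρ0, hρ⟩ := aux_small_pow hp hε2
  set h : Z → ℝ≥0∞ := fun z => edist y₀ (G z) ^ p with hh
  have hhm : Measurable h := (measurable_const.edist hG).pow_const p
  have hhfin : ∀ z, h z ≠ ∞ := fun z => ENNReal.rpow_ne_top_of_nonneg hp0.le (edist_ne_top _ _)
  obtain ⟨τ₁, hτ₁0, hτ₁⟩ := aux_small_mul (C := 2 ^ p * 2)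
    (ENNReal.mul_ne_top h2p (by norm_num)) hε4
  obtain ⟨N, hN⟩ : ∃ N : ℕ, ∫⁻ z, (h z - N) ∂m ≤ τ₁ := by
    have h1 : Tendsto (fun N : ℕ => ∫⁻ z, (h z - N) ∂m) atTop (𝓝 (∫⁻ _, 0 ∂m)) := by
      refine tendsto_lintegral_of_dominated_convergence h
        (fun N => hhm.sub_const _) (fun N => ae_of_all _ fun z => tsub_le_self) hy
        (ae_of_all _ fun z => ?_)
      refine tendsto_const_nhds.congr' ?_
      obtain ⟨M, hM⟩ := ENNReal.exists_nat_gt (hhfin z)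
      filter_upwards [eventually_ge_atTop M] with k hk
      refine (tsub_eq_zero_of_le (hM.le.trans ?_)).symm
      exact_mod_cast hk
    rw [lintegral_zero] at h1
    obtain ⟨N, hN⟩ := (h1.eventually (gt_mem_nhds (pos_iff_ne_zero.2 hτ₁0))).exists
    exact ⟨N, hN.le⟩
  obtain ⟨τ, hτ0, hτ⟩ := aux_small_mul (C := 2 ^ p * 2 * (N * 3))
    (ENNReal.mul_ne_top (ENNReal.mul_ne_top h2p (by norm_num))
      (ENNReal.mul_ne_top (by simp) (by norm_num))) hε4
  obtain ⟨r, hr0, hrt, K, hKm, hK, hKr⟩ := aux_lusin m hG hρ0 hτ0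
  have hrp0 : r ^ p ≠ 0 := by
    rw [Ne, ENNReal.rpow_eq_zero_iff_of_pos hp0]; exact hr0
  have hrpt : r ^ p ≠ ∞ := ENNReal.rpow_ne_top_of_nonneg hp0.le hrt
  refine ⟨r ^ p * τ, mul_ne_zero hrp0 hτ0, fun Λ hΛ1 hΛ2 hΛ => ?_⟩
  have hΛp : IsProbabilityMeasure Λ := ⟨by
    have : Λ Set.univ = (Λ.map Prod.fst) Set.univ := by
      rw [Measure.map_apply measurable_fst MeasurableSet.univ, Set.preimage_univ]
    rw [this, hΛ1]; exact measure_univ⟩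
  have hem : Measurable (fun t : Z × Z => edist t.1 t.2 ^ p) :=
    (measurable_fst.edist measurable_snd).pow_const p
  set far : Set (Z × Z) := {t | r ^ p ≤ edist t.1 t.2 ^ p} with hfar
  have hfarm : MeasurableSet far := measurableSet_le measurable_const hem
  set bad : Set (Z × Z) := (Prod.fst ⁻¹' Kᶜ ∪ Prod.snd ⁻¹' Kᶜ) ∪ far with hbad
  have hbadm : MeasurableSet bad :=
    ((measurable_fst hKm.compl).union (measurable_snd hKm.compl)).union hfarm
  have hΛfar : Λ far ≤ τ := by
    have := (mul_meas_ge_le_lintegral hem (r ^ p)).trans hΛ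
    rwa [ENNReal.mul_le_mul_iff_right hrp0 hrpt] at this
  have hΛbad : Λ bad ≤ 3 * τ := by
    calc Λ bad ≤ (Λ (Prod.fst ⁻¹' Kᶜ) + Λ (Prod.snd ⁻¹' Kᶜ)) + Λ far :=
          (measure_union_le _ _).trans (by gcongr; exact measure_union_le _ _)
      _ ≤ τ + τ + τ := by
          gcongr
          · rw [← Measure.map_apply measurable_fst hKm.compl, hΛ1]; exact hK
          · rw [← Measure.map_apply measurable_snd hKm.compl, hΛ2]; exact hK
      _ = 3 * τ := by ring
  have hintegr : ∀ f : Z × Z → Z, Measurable f → Λ.map f = m →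
      ∫⁻ t in bad, h (f t) ∂Λ ≤ N * (3 * τ) + τ₁ := by
    intro f hf hfm
    calc ∫⁻ t in bad, h (f t) ∂Λ ≤ ∫⁻ t in bad, ((N : ℝ≥0∞) + (h (f t) - N)) ∂Λ :=
          lintegral_mono fun t => le_add_tsub
      _ = N * Λ bad + ∫⁻ t in bad, (h (f t) - N) ∂Λ := by
          rw [lintegral_add_left measurable_const, setLIntegral_const]
      _ ≤ N * (3 * τ) + ∫⁻ t, (h (f t) - N) ∂Λ := by
          gcongr; exact Measure.restrict_le_self
      _ ≤ _ := by
          gcongr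
          rw [← lintegral_map (f := fun z => h z - N) (hhm.sub_const _) hf, hfm]
          exact hN
  rw [← lintegral_add_compl _ hbadm]
  have hb1 : ∫⁻ t in bad, edist (G t.1) (G t.2) ^ p ∂Λ ≤ ε / 2 := by
    calc _ ≤ ∫⁻ t in bad, 2 ^ p * (h t.1 + h t.2) ∂Λ := by
          refine lintegral_mono fun t => ?_
          refine le_trans ?_ (aux_two_pow hp _ _)
          refine ENNReal.rpow_le_rpow ?_ hp0.le
          exact edist_triangle_left _ _ _
      _ = 2 ^ p * (∫⁻ t in bad, h t.1 ∂Λ + ∫⁻ t in bad, h t.2 ∂Λ) := by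
          rw [lintegral_const_mul' _ _ h2p, lintegral_add_left (show Measurable (fun t : Z × Z => h t.1) from
            hhm.comp measurable_fst)]
      _ ≤ 2 ^ p * ((N * (3 * τ) + τ₁) + (N * (3 * τ) + τ₁)) := by
          gcongr
          · exact hintegr _ measurable_fst hΛ1
          · exact hintegr _ measurable_snd hΛ2
      _ = 2 ^ p * 2 * (N * 3) * τ + 2 ^ p * 2 * τ₁ := by ring
      _ ≤ ε / 2 / 2 + ε / 2 / 2 := by gcongr
      _ = ε / 2 := ENNReal.add_halves _
  have hb2 : ∫⁻ t in badᶜ, edist (G t.1) (G t.2) ^ p ∂Λ ≤ ε / 2 := by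
    calc _ ≤ ∫⁻ t in badᶜ, ρ ^ p ∂Λ := by
          refine setLIntegral_mono measurable_const fun t ht => ?_
          refine ENNReal.rpow_le_rpow ?_ hp0.le
          simp only [hbad, hfar, Set.mem_compl_iff, Set.mem_union, Set.mem_preimage, not_or, not_not,
            Set.mem_ofPred_eq, not_le] at ht
          refine hKr _ ht.1.1 _ ht.1.2 ?_
          exact (ENNReal.rpow_lt_rpow_iff hp0).1 ht.2
      _ = ρ ^ p * Λ badᶜ := setLIntegral_const _ _
      _ ≤ ρ ^ p * 1 := by gcongr; exact prob_le_one
      _ ≤ ε / 2 := by rw [mul_one]; exact hρ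
  calc _ ≤ ε / 2 + ε / 2 := add_le_add hb1 hb2
    _ = ε := ENNReal.add_halves _

/-- A measure on `A × 𝒫(B)` concentrated on a graph is carried by a Markov kernel. -/
theorem aux_graph_kernel {A B : Type*} [MeasurableSpace A] [MeasurableSpace B]
    [MeasurableSpace.CountablyGenerated B] [Nonempty B]
    (u : Measure (A × Measure B)) [IsProbabilityMeasure u] {g : A → Measure B} (hg : Measurable g)
    (hu : u {z | z.2 = g z.1} = 1) (hpr : ∀ᵐ z ∂u, IsProbabilityMeasure z.2) :
    ∃ γ : Kernel A B, IsMarkovKernel γ ∧ ∀ᵐ z ∂u, z.2 = γ z.1 := by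
  classical
  set s : ℕ → Set B := MeasurableSpace.natGeneratingSequence B with hs
  set I : Finset ℕ → Set B := fun F => ⋂ i ∈ F, s i with hI
  have hIm : ∀ F, MeasurableSet (I F) := fun F => Finset.measurableSet_biInter _ fun i _ =>
    MeasurableSpace.measurableSet_natGeneratingSequence i
  have hpi : IsPiSystem (Set.range I) := by
    rintro _ ⟨F, rfl⟩ _ ⟨F', rfl⟩ _
    refine ⟨F ∪ F', ?_⟩
    simp only [hI]
    ext x
    simp only [Set.mem_iInter, Finset.mem_union, Set.mem_inter_iff]
    constructor
    · exact fun h => ⟨fun i hi => h i (Or.inl hi), fun i hi => h i (Or.inr hi)⟩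
    · rintro ⟨h1, h2⟩ i (hi | hi)
      exacts [h1 i hi, h2 i hi]
  have hgen : (inferInstance : MeasurableSpace B) = MeasurableSpace.generateFrom (Set.range I) := by
    refine le_antisymm ?_ ?_
    · conv_lhs => rw [← MeasurableSpace.generateFrom_natGeneratingSequence B]
      refine MeasurableSpace.generateFrom_mono ?_
      rintro _ ⟨n, rfl⟩
      exact ⟨{n}, by simp [hI, hs]⟩
    · refine MeasurableSpace.generateFrom_le ?_
      rintro _ ⟨F, rfl⟩
      exact hIm F
  have hcoe : ∀ {t : Set B}, MeasurableSet t → Measurable (fun z : A × Measure B => z.2 t) :=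
    fun ht => (Measure.measurable_coe ht).comp measurable_snd
  have hcoeg : ∀ {t : Set B}, MeasurableSet t → Measurable (fun z : A × Measure B => g z.1 t) :=
    fun ht => (Measure.measurable_coe ht).comp (hg.comp measurable_fst)
  have hS : ∀ F, ∀ᵐ z ∂u, z.2 (I F) = g z.1 (I F) := by
    intro F
    have hm : MeasurableSet {z : A × Measure B | z.2 (I F) = g z.1 (I F)} :=
      measurableSet_eq_fun (hcoe (hIm F)) (hcoeg (hIm F))
    have h1 : u {z : A × Measure B | z.2 (I F) = g z.1 (I F)} = 1 := by
      refine le_antisymm prob_le_one ?_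
      rw [← hu]
      refine measure_mono fun z hz => ?_
      have hz' : z.2 = g z.1 := hz
      change z.2 (I F) = g z.1 (I F)
      rw [hz']
    exact (prob_compl_eq_zero_iff hm).2 h1
  have hall : ∀ᵐ z ∂u, ∀ F, z.2 (I F) = g z.1 (I F) := ae_all_iff.2 hS
  obtain ⟨b₀⟩ := ‹Nonempty B›
  set γ : A → Measure B := fun a => if g a Set.univ = 1 then g a else Measure.dirac b₀ with hγ
  have hγm : Measurable γ := by
    refine Measurable.ite ?_ hg measurable_const
    exact ((Measure.measurable_coe MeasurableSet.univ).comp hg) (measurableSet_singleton 1)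
  refine ⟨⟨γ, hγm⟩, ⟨fun a => ?_⟩, ?_⟩
  · change IsProbabilityMeasure (γ a)
    by_cases h : g a Set.univ = 1
    · simp only [hγ, h, if_true]; exact ⟨h⟩
    · simp only [hγ, h, if_false]; infer_instance
  · filter_upwards [hall, hpr] with z hz hp
    have huniv : z.2 Set.univ = g z.1 Set.univ := by
      have := hz ∅
      simpa [hI] using this
    have e : z.2 = g z.1 := by
      refine ext_of_generate_finite _ hgen hpi ?_ huniv
      rintro _ ⟨F, rfl⟩
      exact hz F
    have h1 : g z.1 Set.univ = 1 := by rw [← huniv]; exact measure_univ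
    change z.2 = γ z.1
    simp only [hγ, h1, if_true]
    exact e

/-- The kernel `a ↦ law of (b, G(a,b))`. -/
theorem aux_kerG {A B Y : Type*} [MeasurableSpace A] [MeasurableSpace B] [MeasurableSpace Y]
    (γ : Kernel A B) [IsMarkovKernel γ] {G : A × B → Y} (hG : Measurable G) :
    ∃ κ : Kernel A (B × Y), IsMarkovKernel κ ∧ ∀ a, κ a = (γ a).map (fun b => (b, G (a, b))) := by
  have hm : Measurable (fun x : A × B => (x.2, G x)) := by fun_prop
  refine ⟨(Kernel.id ×ₖ γ).map (fun x => (x.2, G x)), Kernel.IsMarkovKernel.map _ hm, fun a => ?_⟩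
  rw [Kernel.map_apply _ hm, Kernel.prod_apply, Kernel.id_apply, Measure.dirac_prod,
    Measure.map_map hm measurable_prodMk_left]
  rfl

theorem aux_moment {B : Type*} [MetricSpace B] [MeasurableSpace B] {p : ℝ} (hp : 1 ≤ p)
    {μ : Measure B} (h : MemPp p edist μ) (b₀ : B) : ∫⁻ x, edist b₀ x ^ p ∂μ ≠ ∞ := by
  have hp0 : 0 < p := by linarith
  obtain ⟨hμ, x₀, hx⟩ := h
  have h2p : (2 : ℝ≥0∞) ^ p ≠ ∞ := ENNReal.rpow_ne_top_of_nonneg hp0.le (by norm_num)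
  refine ne_top_of_le_ne_top (b := ∫⁻ x, 2 ^ p * (edist x₀ x ^ p + edist b₀ x₀ ^ p) ∂μ) ?_
    (lintegral_mono fun x => ?_)
  · rw [lintegral_const_mul' _ _ h2p, lintegral_add_right _ measurable_const, lintegral_const,
      measure_univ, mul_one]
    exact ENNReal.mul_ne_top h2p (ENNReal.add_ne_top.2
      ⟨hx, ENNReal.rpow_ne_top_of_nonneg hp0.le (edist_ne_top _ _)⟩)
  · refine le_trans ?_ (aux_two_pow hp _ _)
    refine ENNReal.rpow_le_rpow ?_ hp0.le
    rw [add_comm]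
    exact edist_triangle _ _ _

/-- Structure of the elements of `D`. -/
theorem aux_struct {A B Y : Type*} [MeasurableSpace A]
    [MetricSpace B] [CompleteSpace B] [SecondCountableTopology B]
    [MeasurableSpace B] [BorelSpace B] [Nonempty B]
    [MetricSpace Y] [CompleteSpace Y] [SecondCountableTopology Y]
    [MeasurableSpace Y] [BorelSpace Y] [Nonempty Y]
    {p : ℝ} (hp : 1 ≤ p) (u₁ : Measure (A × Measure B)) (u₂ : Measure ((A × B) × Y))
    [IsProbabilityMeasure u₁] [IsProbabilityMeasure u₂]
    (h1 : ∃ g : A → Measure B, Measurable g ∧ u₁ {z | z.2 = g z.1} = 1)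
    (h2 : ∀ᵐ z ∂u₁, MemPp p edist z.2)
    (h3 : ∃ G : A × B → Y, Measurable G ∧ u₂ {z | z.2 = G z.1} = 1)
    (h4 : und u₁ = u₂.map Prod.fst) :
    ∃ (α : Measure A) (γ : Kernel A B) (G : A × B → Y), IsProbabilityMeasure α ∧
      IsMarkovKernel γ ∧ Measurable G ∧ u₁ = α.map (fun a => (a, γ a)) ∧
      u₂ = (α ⊗ₘ γ).map (fun x => (x, G x)) ∧
      disint (u₂.map (fun z => (z.1.1, (z.1.2, z.2)))) =
        α.map (fun a => (a, (γ a).map (fun b => (b, G (a, b))))) ∧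
      ∀ᵐ a ∂α, MemPp p edist (γ a) := by
  obtain ⟨g, hg, hgu⟩ := h1
  obtain ⟨G, hG, hGu⟩ := h3
  obtain ⟨γ, hγ, hγu⟩ := aux_graph_kernel u₁ hg hgu (h2.mono fun z hz => hz.1)
  set α : Measure A := u₁.map Prod.fst with hα
  have hαp : IsProbabilityMeasure α := Measure.isProbabilityMeasure_map measurable_fst.aemeasurable
  have hgm : Measurable (fun a : A => (a, γ a)) := measurable_id.prodMk γ.measurable
  have e1 : u₁ = α.map (fun a => (a, γ a)) := by
    rw [hα, Measure.map_map hgm measurable_fst]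
    conv_lhs => rw [← Measure.map_id (μ := u₁)]
    refine Measure.map_congr ?_
    filter_upwards [hγu] with z hz
    exact Prod.ext rfl hz
  have hund : und u₁ = α ⊗ₘ γ := by
    have hb : (fun z : A × Measure B => (Measure.dirac z.1).prod z.2) =ᵐ[u₁]
        fun z => (Kernel.id ×ₖ γ) z.1 := by
      filter_upwards [hγu] with z hz
      rw [Kernel.prod_apply, Kernel.id_apply, ← hz]
    rw [und, Measure.bind_congr_right hb, Measure.compProd_eq_comp_prod, hα, Measure.bind,
      Measure.bind, Measure.map_map (Kernel.measurable _) measurable_fst]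
    rfl
  have hGm : Measurable (fun x : A × B => (x, G x)) := measurable_id.prodMk hG
  have e2 : u₂ = (α ⊗ₘ γ).map (fun x => (x, G x)) := by
    rw [← hund, h4, Measure.map_map hGm measurable_fst]
    conv_lhs => rw [← Measure.map_id (μ := u₂)]
    refine Measure.map_congr ?_
    have hm : MeasurableSet {z : (A × B) × Y | z.2 = G z.1} :=
      measurableSet_eq_fun measurable_snd (hG.comp measurable_fst)
    have : ∀ᵐ z ∂u₂, z.2 = G z.1 := (prob_compl_eq_zero_iff hm).2 hGu
    filter_upwards [this] with z hz
    exact Prod.ext rfl hz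
  refine ⟨α, γ, G, hαp, hγ, hG, e1, e2, ?_, ?_⟩
  · obtain ⟨κ, hκ, hκa⟩ := aux_kerG γ hG
    have hm3 : Measurable (fun z : (A × B) × Y => (z.1.1, (z.1.2, z.2))) := by fun_prop
    have hm4 : Measurable (fun x : A × B => (x.1, (x.2, G x))) := by fun_prop
    have e3 : u₂.map (fun z => (z.1.1, (z.1.2, z.2))) = α ⊗ₘ κ := by
      rw [e2, Measure.map_map hm3 hGm]
      ext t ht
      rw [Measure.map_apply (hm3.comp hGm) ht, Measure.compProd_apply ((hm3.comp hGm) ht),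
        Measure.compProd_apply ht]
      refine lintegral_congr fun a => ?_
      rw [hκa, Measure.map_apply (by fun_prop) (measurable_prodMk_left ht)]
      rfl
    rw [e3, disint]
    have hκm : Measurable (fun a : A => (a, κ a)) := measurable_id.prodMk κ.measurable
    have h5 : ∀ᵐ x ∂(α ⊗ₘ κ).fst, κ x = (α ⊗ₘ κ).condKernel x := by
      refine eq_condKernel_of_measure_eq_compProd κ ?_
      rw [Measure.fst_compProd]
    have h6 : (fun z : A × (B × Y) => (z.1, condK (α ⊗ₘ κ) z.1)) =ᵐ[α ⊗ₘ κ]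
        fun z => (z.1, κ z.1) := by
      have h7 : ∀ᵐ z ∂(α ⊗ₘ κ), κ z.1 = (α ⊗ₘ κ).condKernel z.1 :=
        ae_of_ae_map measurable_fst.aemeasurable h5
      filter_upwards [h7] with z hz
      refine Prod.ext rfl ?_
      simp only [condK]
      rw [dif_pos (inferInstance : IsFiniteMeasure (α ⊗ₘ κ)), hz]
    rw [Measure.map_congr h6]
    have h8 : (fun z : A × (B × Y) => (z.1, κ z.1)) = (fun a => (a, κ a)) ∘ Prod.fst := rfl
    rw [h8, ← Measure.map_map hκm measurable_fst]
    have h9 : (α ⊗ₘ κ).map Prod.fst = α := Measure.fst_compProd _ _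
    rw [h9]
    simp only [hκa]
  · obtain ⟨b₀⟩ := ‹Nonempty B›
    have hm : MeasurableSet {a : A | ∫⁻ x, edist b₀ x ^ p ∂(γ a) ≠ ∞} := by
      have : Measurable (fun a => ∫⁻ x, edist b₀ x ^ p ∂(γ a)) :=
        ((measurable_const.edist measurable_id).pow_const p).lintegral_kernel
      exact (this (measurableSet_singleton ∞)).compl
    have : ∀ᵐ a ∂α, ∫⁻ x, edist b₀ x ^ p ∂(γ a) ≠ ∞ := by
      rw [hα, ae_map_iff measurable_fst.aemeasurable hm]
      filter_upwards [hγu, h2] with z hz hz2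
      rw [← hz]
      exact aux_moment hp hz2 b₀
    filter_upwards [this] with a ha
    exact ⟨inferInstance, b₀, ha⟩

theorem aux_prob_of_map {α β : Type*} [MeasurableSpace α] [MeasurableSpace β] {f : α → β}
    (hf : Measurable f) {μ : Measure α} {ν : Measure β} [IsProbabilityMeasure ν]
    (h : μ.map f = ν) : IsProbabilityMeasure μ := ⟨by
  have : μ Set.univ = (μ.map f) Set.univ := by
    rw [Measure.map_apply hf MeasurableSet.univ, Set.preimage_univ]
  rw [this, h]; exact measure_univ⟩

/-- The image of `α` under `a ↦ (a, γ a)` is carried by the graph of `γ`. -/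
theorem aux_graph_ae {A B : Type*} [MeasurableSpace A] [MeasurableSpace B]
    [MeasurableSpace.CountablyGenerated B] [Nonempty B]
    (α : Measure A) [IsProbabilityMeasure α] (γ : Kernel A B) [IsMarkovKernel γ] :
    ∀ᵐ z ∂(α.map (fun a => (a, γ a))), z.2 = γ z.1 := by
  have hgm : Measurable (fun a : A => (a, γ a)) := measurable_id.prodMk γ.measurable
  have hpm : IsProbabilityMeasure (α.map (fun a => (a, γ a))) :=
    Measure.isProbabilityMeasure_map hgm.aemeasurable
  have hfst : (α.map (fun a => (a, γ a))).map Prod.fst = α := by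
    rw [Measure.map_map measurable_fst hgm]; exact Measure.map_id
  have h1 : (α.map (fun a => (a, γ a))) {z | z.2 = γ z.1} = 1 := by
    refine le_antisymm prob_le_one ?_
    have h2 := Measure.le_map_apply (μ := α) hgm.aemeasurable {z : A × Measure B | z.2 = γ z.1}
    have h3 : (fun a : A => (a, γ a)) ⁻¹' {z | z.2 = γ z.1} = Set.univ := by ext a; simp
    rw [h3, measure_univ] at h2
    exact h2
  have h2 : ∀ᵐ z ∂(α.map (fun a => (a, γ a))), IsProbabilityMeasure z.2 := by
    have hm : MeasurableSet {z : A × Measure B | z.2 Set.univ = 1} :=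
      ((Measure.measurable_coe MeasurableSet.univ).comp measurable_snd) (measurableSet_singleton 1)
    have : ∀ᵐ z ∂(α.map (fun a => (a, γ a))), z.2 Set.univ = 1 := by
      rw [ae_map_iff hgm.aemeasurable hm]
      exact ae_of_all _ fun a => measure_univ
    exact this.mono fun z hz => ⟨hz⟩
  obtain ⟨γ', hγ', h3⟩ := aux_graph_kernel _ γ.measurable h1 h2
  have h4 : ∀ᵐ a ∂α, γ a = γ' a := ae_of_ae_map hgm.aemeasurable h3
  rw [← hfst] at h4
  have h5 := ae_of_ae_map measurable_fst.aemeasurable h4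
  filter_upwards [h3, h5] with z hz hz'
  exact hz.trans hz'.symm

theorem aux_compProd_map {A A' B B' : Type*} [MeasurableSpace A] [MeasurableSpace B]
    [MeasurableSpace A'] [MeasurableSpace B']
    (Γ : Measure A') [IsProbabilityMeasure Γ] (Q : Kernel A' B') [IsMarkovKernel Q]
    (α : Measure A) [IsProbabilityMeasure α] (γ : Kernel A B) [IsMarkovKernel γ]
    {f : A' → A} {h : B' → B} (hf : Measurable f) (hh : Measurable h) (h1 : Γ.map f = α)
    (h2 : ∀ t, (Q t).map h = γ (f t)) :
    (Γ ⊗ₘ Q).map (fun t => (f t.1, h t.2)) = α ⊗ₘ γ := by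
  have hm : Measurable (fun t : A' × B' => (f t.1, h t.2)) := by fun_prop
  ext s hs
  rw [Measure.map_apply hm hs, Measure.compProd_apply (hm hs), Measure.compProd_apply hs, ← h1,
    lintegral_map (Kernel.measurable_kernel_prodMk_left hs) hf]
  refine lintegral_congr fun t => ?_
  rw [← h2, Measure.map_apply hh (measurable_prodMk_left hs)]
  rfl

theorem aux_prodDist_pow {α β : Type*} {p : ℝ} (hp : 1 ≤ p) (d₁ : α → α → ℝ≥0∞)
    (d₂ : β → β → ℝ≥0∞) (u v : α × β) :
    prodDist p d₁ d₂ u v ^ p = d₁ u.1 v.1 ^ p + d₂ u.2 v.2 ^ p := by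
  have hp0 : 0 < p := by linarith
  rw [prodDist, ← ENNReal.rpow_mul, one_div_mul_cancel hp0.ne', ENNReal.rpow_one]

/-- First step: a coupling of the `A`-marginals with a kernel of couplings. -/
theorem aux_step1 {A B : Type*} [MetricSpace A] [SecondCountableTopology A]
    [MeasurableSpace A] [BorelSpace A]
    [MetricSpace B] [SecondCountableTopology B]
    [MeasurableSpace B] [BorelSpace B] [Nonempty B] {p : ℝ} (hp : 1 ≤ p)
    (α₀ α : Measure A) [IsProbabilityMeasure α₀] [IsProbabilityMeasure α]
    (γ₀ γ : Kernel A B) [IsMarkovKernel γ₀] [IsMarkovKernel γ]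
    (h₀ : ∀ᵐ a ∂α₀, MemPp p edist (γ₀ a)) (h : ∀ᵐ a ∂α, MemPp p edist (γ a))
    {δ ε : ℝ≥0∞} (hε : ε ≠ 0)
    (hW : Wp p (prodDist p edist (Wp p edist)) (α₀.map (fun a => (a, γ₀ a)))
      (α.map (fun a => (a, γ a))) < δ) :
    ∃ (Γ : Measure (A × A)) (Q : Kernel (A × A) (B × B)), IsMarkovKernel Q ∧
      Γ.map Prod.fst = α₀ ∧ Γ.map Prod.snd = α ∧ (∀ t, (Q t).map Prod.fst = γ₀ t.1) ∧
      (∀ t, (Q t).map Prod.snd = γ t.2) ∧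
      ∫⁻ t, (edist t.1 t.2 ^ p + ∫⁻ z, edist z.1 z.2 ^ p ∂(Q t)) ∂Γ ≤ 2 ^ p * δ ^ p + ε := by
  have hp0 : 0 < p := by linarith
  have h2p : (2 : ℝ≥0∞) ^ p ≠ ∞ := ENNReal.rpow_ne_top_of_nonneg hp0.le (by norm_num)
  have h2p1 : 1 ≤ (2 : ℝ≥0∞) ^ p := ENNReal.one_le_rpow (by norm_num) hp0
  obtain ⟨Γ', hΓ1, hΓ2, hΓc⟩ := aux_Wp_lt hW
  obtain ⟨Q, hQ, hQ1, hQ2, hQc⟩ := aux_kernel_coupling hp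
    (γ₀.comap (Prod.fst : A × A → A) measurable_fst)
    (γ.comap (Prod.snd : A × A → A) measurable_snd) hε
  have hgm : Measurable (fun a : A => (a, γ a)) := measurable_id.prodMk γ.measurable
  have hgm₀ : Measurable (fun a : A => (a, γ₀ a)) := measurable_id.prodMk γ₀.measurable
  have hpm : IsProbabilityMeasure (α.map (fun a => (a, γ a))) :=
    Measure.isProbabilityMeasure_map hgm.aemeasurable
  have hΓp : IsProbabilityMeasure Γ' := aux_prob_of_map measurable_snd hΓ2
  have hm : Measurable (fun z : (A × Measure B) × (A × Measure B) => (z.1.1, z.2.1)) := by fun_prop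
  have e1 : Γ'.map (fun z => z.1.1) = α₀ := by
    have : (fun z : (A × Measure B) × (A × Measure B) => z.1.1) = Prod.fst ∘ Prod.fst := rfl
    rw [this, ← Measure.map_map measurable_fst measurable_fst, hΓ1,
      Measure.map_map measurable_fst hgm₀]
    exact Measure.map_id
  have e2 : Γ'.map (fun z => z.2.1) = α := by
    have : (fun z : (A × Measure B) × (A × Measure B) => z.2.1) = Prod.fst ∘ Prod.snd := rfl
    rw [this, ← Measure.map_map measurable_fst measurable_snd, hΓ2,
      Measure.map_map measurable_fst hgm]
    exact Measure.map_id
  refine ⟨Γ'.map (fun z => (z.1.1, z.2.1)), Q, hQ, ?_, ?_, hQ1, hQ2, ?_⟩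
  · rw [Measure.map_map measurable_fst hm]; exact e1
  · rw [Measure.map_map measurable_snd hm]; exact e2
  have hem : Measurable (fun t : B × B => edist t.1 t.2 ^ p) :=
    (measurable_fst.edist measurable_snd).pow_const p
  have heA : Measurable (fun t : A × A => edist t.1 t.2 ^ p) :=
    (measurable_fst.edist measurable_snd).pow_const p
  rw [lintegral_map (show Measurable (fun t : A × A => edist t.1 t.2 ^ p +
    ∫⁻ z, edist z.1 z.2 ^ p ∂(Q t)) from heA.add hem.lintegral_kernel) hm]
  have a1 : ∀ᵐ z ∂Γ', z.1.2 = γ₀ z.1.1 := by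
    have := aux_graph_ae α₀ γ₀
    rw [← hΓ1] at this
    exact ae_of_ae_map measurable_fst.aemeasurable this
  have a2 : ∀ᵐ z ∂Γ', z.2.2 = γ z.2.1 := by
    have := aux_graph_ae α γ
    rw [← hΓ2] at this
    exact ae_of_ae_map measurable_snd.aemeasurable this
  have a3 : ∀ᵐ z ∂Γ', MemPp p edist (γ₀ z.1.1) := by
    rw [← e1] at h₀
    exact ae_of_ae_map (f := fun z : (A × Measure B) × (A × Measure B) => z.1.1)
      (p := fun a => MemPp p edist (γ₀ a)) (by fun_prop) h₀
  have a4 : ∀ᵐ z ∂Γ', MemPp p edist (γ z.2.1) := by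
    rw [← e2] at h
    exact ae_of_ae_map (f := fun z : (A × Measure B) × (A × Measure B) => z.2.1)
      (p := fun a => MemPp p edist (γ a)) (by fun_prop) h
  calc _ ≤ ∫⁻ z, (2 ^ p * prodDist p edist (Wp p edist) z.1 z.2 ^ p + ε) ∂Γ' := by
        refine lintegral_mono_ae ?_
        filter_upwards [a1, a2, a3, a4] with z b1 b2 b3 b4
        rw [aux_prodDist_pow hp, mul_add, add_assoc]
        refine add_le_add ?_ ?_
        · exact le_mul_of_one_le_left (zero_le) h2p1
        · rw [b1, b2]
          exact hQc (z.1.1, z.2.1) b3 b4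
    _ = 2 ^ p * ∫⁻ z, prodDist p edist (Wp p edist) z.1 z.2 ^ p ∂Γ' + ε := by
        rw [lintegral_add_right _ measurable_const, lintegral_const, measure_univ, mul_one,
          lintegral_const_mul' _ _ h2p]
    _ ≤ _ := by
        gcongr
        calc _ = ((∫⁻ z, prodDist p edist (Wp p edist) z.1 z.2 ^ p ∂Γ') ^ (1 / p)) ^ p := by
              rw [← ENNReal.rpow_mul, one_div_mul_cancel hp0.ne', ENNReal.rpow_one]
          _ ≤ _ := ENNReal.rpow_le_rpow hΓc.le hp0.le

/-- Second step: transferring the cost from one coupling to another. -/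
theorem aux_step2 {Z Y : Type*} [MetricSpace Z] [CompleteSpace Z] [SecondCountableTopology Z]
    [MeasurableSpace Z] [BorelSpace Z] [Nonempty Z] [MetricSpace Y] [SecondCountableTopology Y]
    [MeasurableSpace Y] [BorelSpace Y] {p : ℝ} (hp : 1 ≤ p)
    (m₀ m : Measure Z) [IsProbabilityMeasure m₀] [IsProbabilityMeasure m] {G₀ G : Z → Y}
    (hG₀ : Measurable G₀) (hG : Measurable G) {ε η K L : ℝ≥0∞}
    (hη : ∀ Λ : Measure (Z × Z), Λ.map Prod.fst = m₀ → Λ.map Prod.snd = m₀ →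
      ∫⁻ t, edist t.1 t.2 ^ p ∂Λ ≤ η → ∫⁻ t, edist (G₀ t.1) (G₀ t.2) ^ p ∂Λ ≤ ε)
    (P S : Measure (Z × Z)) (hP1 : P.map Prod.fst = m₀) (hP2 : P.map Prod.snd = m)
    (hS1 : S.map Prod.fst = m₀) (hS2 : S.map Prod.snd = m)
    (hPc : ∫⁻ t, edist t.1 t.2 ^ p ∂P ≤ K) (hSc : ∫⁻ t, edist t.1 t.2 ^ p ∂S ≤ L)
    (hSG : ∫⁻ t, edist (G₀ t.1) (G t.2) ^ p ∂S ≤ L) (hKL : 2 ^ p * (K + L) ≤ η) :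
    ∫⁻ t, edist (G₀ t.1) (G t.2) ^ p ∂P ≤ 2 ^ p * (ε + L) := by
  have hp0 : 0 < p := by linarith
  have h2p : (2 : ℝ≥0∞) ^ p ≠ ∞ := ENNReal.rpow_ne_top_of_nonneg hp0.le (by norm_num)
  have hPp : IsProbabilityMeasure P := aux_prob_of_map measurable_fst hP1
  have hSp : IsProbabilityMeasure S := aux_prob_of_map measurable_fst hS1
  have hSs : IsProbabilityMeasure (S.map Prod.swap) :=
    Measure.isProbabilityMeasure_map measurable_swap.aemeasurable
  obtain ⟨T, hT1, hT2⟩ := aux_glue P (S.map Prod.swap) (by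
    rw [hP2, Measure.map_map measurable_fst measurable_swap, ← hS2]; rfl)
  have hm2 : Measurable (fun t : (Z × Z) × Z => (t.1.2, t.2)) := by fun_prop
  have hm3 : Measurable (fun t : (Z × Z) × Z => (t.1.1, t.2)) := by fun_prop
  have hT3 : T.map (fun t => (t.2, t.1.2)) = S := by
    have : (fun t : (Z × Z) × Z => (t.2, t.1.2)) = Prod.swap ∘ (fun t => (t.1.2, t.2)) := rfl
    rw [this, ← Measure.map_map measurable_swap hm2, hT2,
      Measure.map_map measurable_swap measurable_swap, Prod.swap_swap_eq, Measure.map_id]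
  have hm4 : Measurable (fun t : (Z × Z) × Z => (t.2, t.1.2)) := by fun_prop
  have hem : Measurable (fun t : Z × Z => edist t.1 t.2 ^ p) :=
    (measurable_fst.edist measurable_snd).pow_const p
  have hGm : Measurable (fun t : Z × Z => edist (G₀ t.1) (G t.2) ^ p) :=
    ((hG₀.comp measurable_fst).edist (hG.comp measurable_snd)).pow_const p
  have hGm0 : Measurable (fun t : Z × Z => edist (G₀ t.1) (G₀ t.2) ^ p) :=
    ((hG₀.comp measurable_fst).edist (hG₀.comp measurable_snd)).pow_const p
  have c1 : ∫⁻ t, edist t.1.1 t.1.2 ^ p ∂T ≤ K := by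
    rw [← hT1, lintegral_map hem measurable_fst] at hPc; exact hPc
  have c2 : ∫⁻ t, edist t.2 t.1.2 ^ p ∂T ≤ L := by
    rw [← hT3, lintegral_map hem hm4] at hSc; exact hSc
  have c3 : ∫⁻ t, edist (G₀ t.2) (G t.1.2) ^ p ∂T ≤ L := by
    rw [← hT3, lintegral_map hGm hm4] at hSG; exact hSG
  have c4 : ∫⁻ t, edist (G₀ t.1.1) (G₀ t.2) ^ p ∂T ≤ ε := by
    have := hη (T.map (fun t => (t.1.1, t.2))) ?_ ?_ ?_
    · rw [lintegral_map hGm0 hm3] at this; exact this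
    · rw [Measure.map_map measurable_fst hm3, ← hP1, ← hT1,
        Measure.map_map measurable_fst measurable_fst]
      rfl
    · rw [Measure.map_map measurable_snd hm3, ← hS1]
      conv_rhs => rw [← hT3, Measure.map_map measurable_fst hm4]
      rfl
    · rw [lintegral_map hem hm3]
      refine le_trans ?_ hKL
      calc _ ≤ ∫⁻ t : (Z × Z) × Z, 2 ^ p * (edist t.1.1 t.1.2 ^ p + edist t.2 t.1.2 ^ p) ∂T := by
            refine lintegral_mono fun t => ?_
            refine le_trans ?_ (aux_two_pow hp _ _)
            refine ENNReal.rpow_le_rpow ?_ hp0.le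
            exact edist_triangle_right _ _ _
        _ = 2 ^ p * (∫⁻ t, edist t.1.1 t.1.2 ^ p ∂T + ∫⁻ t, edist t.2 t.1.2 ^ p ∂T) := by
            rw [lintegral_const_mul' _ _ h2p, lintegral_add_right _
              (show Measurable (fun t : (Z × Z) × Z => edist t.2 t.1.2 ^ p) from hem.comp hm4)]
        _ ≤ _ := by gcongr
  rw [← hT1, lintegral_map hGm measurable_fst]
  calc _ ≤ ∫⁻ t : (Z × Z) × Z, 2 ^ p * (edist (G₀ t.1.1) (G₀ t.2) ^ p +
        edist (G₀ t.2) (G t.1.2) ^ p) ∂T := by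
        refine lintegral_mono fun t => ?_
        refine le_trans ?_ (aux_two_pow hp _ _)
        refine ENNReal.rpow_le_rpow ?_ hp0.le
        exact edist_triangle _ _ _
    _ = 2 ^ p * (∫⁻ t, edist (G₀ t.1.1) (G₀ t.2) ^ p ∂T +
        ∫⁻ t, edist (G₀ t.2) (G t.1.2) ^ p ∂T) := by
        rw [lintegral_const_mul' _ _ h2p, lintegral_add_right _
          (show Measurable (fun t : (Z × Z) × Z => edist (G₀ t.2) (G t.1.2) ^ p) from
            hGm.comp hm4)]
    _ ≤ _ := by gcongr

/-- The main estimate. -/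
theorem aux_main {A B Y : Type*} [MetricSpace A] [CompleteSpace A] [SecondCountableTopology A]
    [MeasurableSpace A] [BorelSpace A] [Nonempty A]
    [MetricSpace B] [CompleteSpace B] [SecondCountableTopology B]
    [MeasurableSpace B] [BorelSpace B] [Nonempty B]
    [MetricSpace Y] [CompleteSpace Y] [SecondCountableTopology Y]
    [MeasurableSpace Y] [BorelSpace Y] [Nonempty Y]
    {p : ℝ} (hp : 1 ≤ p) (α₀ : Measure A) [IsProbabilityMeasure α₀] (γ₀ : Kernel A B)
    [IsMarkovKernel γ₀] {G₀ : A × B → Y} (hG₀ : Measurable G₀)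
    (h₀ : ∀ᵐ a ∂α₀, MemPp p edist (γ₀ a)) {y₀ : Y}
    (hy₀ : ∫⁻ x, edist y₀ (G₀ x) ^ p ∂(α₀ ⊗ₘ γ₀) ≠ ∞) {ε : ℝ≥0∞} (hε : ε ≠ 0) :
    ∃ δ : ℝ≥0∞, δ ≠ 0 ∧ ∀ (α : Measure A) (γ : Kernel A B) (G : A × B → Y),
      IsProbabilityMeasure α → IsMarkovKernel γ → Measurable G →
      (∀ᵐ a ∂α, MemPp p edist (γ a)) →
      Wp p (prodDist p edist (Wp p edist)) (α₀.map (fun a => (a, γ₀ a)))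
        (α.map (fun a => (a, γ a))) < δ →
      Wp p (prodDist p (prodDist p edist edist) edist) ((α₀ ⊗ₘ γ₀).map (fun x => (x, G₀ x)))
        ((α ⊗ₘ γ).map (fun x => (x, G x))) < δ →
      ∃ (Γ : Measure (A × A)) (c : A × A → ℝ≥0∞), Γ.map Prod.fst = α₀ ∧ Γ.map Prod.snd = α ∧
        Measurable c ∧
        (∀ t, Wp p (prodDist p edist edist) ((γ₀ t.1).map (fun b => (b, G₀ (t.1, b))))
          ((γ t.2).map (fun b => (b, G (t.2, b)))) ^ p ≤ c t) ∧
        ∫⁻ t, (edist t.1 t.2 ^ p + c t) ∂Γ ≤ ε := by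
  have hp0 : 0 < p := by linarith
  have h2p : (2 : ℝ≥0∞) ^ p ≠ ∞ := ENNReal.rpow_ne_top_of_nonneg hp0.le (by norm_num)
  have hε2 : ε / 2 ≠ 0 := (ENNReal.half_pos hε).ne'
  obtain ⟨ε₁, hε₁0, hε₁⟩ := aux_small_mul h2p hε2
  obtain ⟨η, hη0, hη⟩ := aux_uniform hp (α₀ ⊗ₘ γ₀) hG₀ hy₀ hε₁0
  obtain ⟨L₁, hL₁0, hL₁⟩ := aux_small_mul (C := 2 ^ p + 1 + 2 ^ p) (by simp [h2p]) hε2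
  obtain ⟨L₂, hL₂0, hL₂⟩ := aux_small_mul (C := 2 ^ p * (2 ^ p + 2))
    (ENNReal.mul_ne_top h2p (by simp [h2p])) hη0
  have hL0 : min L₁ L₂ ≠ 0 :=
    (lt_min (pos_iff_ne_zero.2 hL₁0) (pos_iff_ne_zero.2 hL₂0)).ne'
  obtain ⟨δ, hδ0, hδ⟩ := aux_small_pow hp hL0
  set L := δ ^ p with hL
  have hLne : L ≠ 0 := by
    rw [hL, Ne, ENNReal.rpow_eq_zero_iff_of_pos hp0]; exact hδ0
  refine ⟨δ, hδ0, fun α γ G hα hγ hG h hW1 hW2 => ?_⟩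
  obtain ⟨Γ, Q, hQ, hΓ1, hΓ2, hQ1, hQ2, hcost⟩ := aux_step1 hp α₀ α γ₀ γ h₀ h hLne hW1
  have hΓp : IsProbabilityMeasure Γ := aux_prob_of_map measurable_fst hΓ1
  -- the coupling of the two measures on `A × B` induced by `Γ` and `Q`
  have hX : Measurable (fun t : (A × A) × (B × B) => ((t.1.1, t.2.1), (t.1.2, t.2.2))) := by
    fun_prop
  set P : Measure ((A × B) × (A × B)) :=
    (Γ ⊗ₘ Q).map (fun t => ((t.1.1, t.2.1), (t.1.2, t.2.2))) with hP
  have hP1 : P.map Prod.fst = α₀ ⊗ₘ γ₀ := by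
    rw [hP, Measure.map_map measurable_fst hX]
    exact aux_compProd_map Γ Q α₀ γ₀ measurable_fst measurable_fst hΓ1 hQ1
  have hP2 : P.map Prod.snd = α ⊗ₘ γ := by
    rw [hP, Measure.map_map measurable_snd hX]
    exact aux_compProd_map Γ Q α γ measurable_snd measurable_snd hΓ2 hQ2
  have hemB : Measurable (fun t : B × B => edist t.1 t.2 ^ p) :=
    (measurable_fst.edist measurable_snd).pow_const p
  have hemA : Measurable (fun t : A × A => edist t.1 t.2 ^ p) :=
    (measurable_fst.edist measurable_snd).pow_const p
  have hemAB : Measurable (fun t : (A × B) × (A × B) => edist t.1 t.2 ^ p) :=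
    (measurable_fst.edist measurable_snd).pow_const p
  have hGG : Measurable (fun t : (A × B) × (A × B) => edist (G₀ t.1) (G t.2) ^ p) :=
    ((hG₀.comp measurable_fst).edist (hG.comp measurable_snd)).pow_const p
  have hsup : ∀ x x' : A × B, edist x x' ^ p ≤ edist x.1 x'.1 ^ p + edist x.2 x'.2 ^ p := by
    intro x x'
    rw [Prod.edist_eq]
    rcases max_cases (edist x.1 x'.1) (edist x.2 x'.2) with h | h
    · rw [h.1]; exact le_self_add
    · rw [h.1]; exact le_add_self
  have hPc : ∫⁻ t, edist t.1 t.2 ^ p ∂P ≤ 2 ^ p * L + L := by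
    rw [hP, lintegral_map hemAB hX]
    refine le_trans ?_ hcost
    refine (Measure.lintegral_compProd (hemAB.comp hX)).le.trans ?_
    refine lintegral_mono fun t => ?_
    calc _ ≤ ∫⁻ z, (edist t.1 t.2 ^ p + edist z.1 z.2 ^ p) ∂(Q t) :=
          lintegral_mono fun z => hsup (t.1, z.1) (t.2, z.2)
      _ = _ := by rw [lintegral_add_left measurable_const, lintegral_const, measure_univ, mul_one]
  -- the coupling coming from the second Wasserstein distance
  obtain ⟨S', hS1', hS2', hSc'⟩ := aux_Wp_lt hW2
  have hGm : Measurable (fun x : A × B => (x, G x)) := measurable_id.prodMk hG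
  have hGm₀ : Measurable (fun x : A × B => (x, G₀ x)) := measurable_id.prodMk hG₀
  have hmS : Measurable (fun z : ((A × B) × Y) × ((A × B) × Y) => (z.1.1, z.2.1)) := by fun_prop
  set S : Measure ((A × B) × (A × B)) := S'.map (fun z => (z.1.1, z.2.1)) with hS
  have hS1 : S.map Prod.fst = α₀ ⊗ₘ γ₀ := by
    have : (Prod.fst ∘ fun z : ((A × B) × Y) × ((A × B) × Y) => (z.1.1, z.2.1)) =
      Prod.fst ∘ Prod.fst := rfl
    rw [hS, Measure.map_map measurable_fst hmS, this,
      ← Measure.map_map measurable_fst measurable_fst, hS1', Measure.map_map measurable_fst hGm₀]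
    exact Measure.map_id
  have hS2 : S.map Prod.snd = α ⊗ₘ γ := by
    have : (Prod.snd ∘ fun z : ((A × B) × Y) × ((A × B) × Y) => (z.1.1, z.2.1)) =
      Prod.fst ∘ Prod.snd := rfl
    rw [hS, Measure.map_map measurable_snd hmS, this,
      ← Measure.map_map measurable_fst measurable_snd, hS2', Measure.map_map measurable_fst hGm]
    exact Measure.map_id
  have hS'c : ∫⁻ z, prodDist p (prodDist p edist edist) edist z.1 z.2 ^ p ∂S' ≤ L := by
    calc _ = ((∫⁻ z, prodDist p (prodDist p edist edist) edist z.1 z.2 ^ p ∂S') ^ (1 / p)) ^ p := by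
          rw [← ENNReal.rpow_mul, one_div_mul_cancel hp0.ne', ENNReal.rpow_one]
      _ ≤ _ := ENNReal.rpow_le_rpow hSc'.le hp0.le
  have a1 : ∀ᵐ z ∂S', z.1.2 = G₀ z.1.1 := by
    have h1 : ∀ᵐ w ∂((α₀ ⊗ₘ γ₀).map (fun x => (x, G₀ x))), w.2 = G₀ w.1 := by
      rw [ae_map_iff hGm₀.aemeasurable
        (show MeasurableSet {w : (A × B) × Y | w.2 = G₀ w.1} from
          measurableSet_eq_fun measurable_snd (hG₀.comp measurable_fst))]
      exact ae_of_all _ fun x => rfl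
    rw [← hS1'] at h1
    exact ae_of_ae_map measurable_fst.aemeasurable h1
  have a2 : ∀ᵐ z ∂S', z.2.2 = G z.2.1 := by
    have h1 : ∀ᵐ w ∂((α ⊗ₘ γ).map (fun x => (x, G x))), w.2 = G w.1 := by
      rw [ae_map_iff hGm.aemeasurable
        (show MeasurableSet {w : (A × B) × Y | w.2 = G w.1} from
          measurableSet_eq_fun measurable_snd (hG.comp measurable_fst))]
      exact ae_of_all _ fun x => rfl
    rw [← hS2'] at h1
    exact ae_of_ae_map measurable_snd.aemeasurable h1
  have hSc : ∫⁻ t, edist t.1 t.2 ^ p ∂S ≤ L := by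
    rw [hS, lintegral_map hemAB hmS]
    refine le_trans (lintegral_mono fun z => ?_) hS'c
    rw [aux_prodDist_pow hp, aux_prodDist_pow hp]
    exact (hsup _ _).trans le_self_add
  have hSG : ∫⁻ t, edist (G₀ t.1) (G t.2) ^ p ∂S ≤ L := by
    rw [hS, lintegral_map hGG hmS]
    refine le_trans (lintegral_mono_ae ?_) hS'c
    filter_upwards [a1, a2] with z b1 b2
    rw [aux_prodDist_pow hp, ← b1, ← b2]
    exact le_add_self
  have hPG : ∫⁻ t, edist (G₀ t.1) (G t.2) ^ p ∂P ≤ 2 ^ p * (ε₁ + L) := by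
    refine aux_step2 hp _ _ hG₀ hG hη P S hP1 hP2 hS1 hS2 hPc hSc hSG ?_
    calc 2 ^ p * (2 ^ p * L + L + L) = 2 ^ p * (2 ^ p + 2) * L := by ring
      _ ≤ 2 ^ p * (2 ^ p + 2) * L₂ := by gcongr; exact hδ.trans (min_le_right _ _)
      _ ≤ η := hL₂
  -- the conclusion
  have hmG : Measurable (fun q : (A × A) × (B × B) =>
      edist (G₀ (q.1.1, q.2.1)) (G (q.1.2, q.2.2)) ^ p) := hGG.comp hX
  set c₁ : A × A → ℝ≥0∞ := fun t => ∫⁻ z, edist z.1 z.2 ^ p ∂(Q t) with hc₁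
  set c₂ : A × A → ℝ≥0∞ := fun t =>
    ∫⁻ z, edist (G₀ (t.1, z.1)) (G (t.2, z.2)) ^ p ∂(Q t) with hc₂
  have hc₁m : Measurable c₁ := hemB.lintegral_kernel
  have hc₂m : Measurable c₂ := Measurable.lintegral_kernel_prod_right' hmG
  refine ⟨Γ, fun t => c₁ t + c₂ t, hΓ1, hΓ2, hc₁m.add hc₂m, fun t => ?_, ?_⟩
  · have hmt : Measurable (fun z : B × B => ((z.1, G₀ (t.1, z.1)), (z.2, G (t.2, z.2)))) := by
      fun_prop
    have hm1 : Measurable (fun b : B => (b, G₀ (t.1, b))) := by fun_prop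
    have hm2 : Measurable (fun b : B => (b, G (t.2, b))) := by fun_prop
    have hw := aux_Wp_le (p := p) (d := prodDist p (edist : B → B → ℝ≥0∞) (edist : Y → Y → ℝ≥0∞))
      (μ := (γ₀ t.1).map (fun b => (b, G₀ (t.1, b)))) (ν := (γ t.2).map (fun b => (b, G (t.2, b))))
      ((Q t).map (fun z => ((z.1, G₀ (t.1, z.1)), (z.2, G (t.2, z.2)))))
      (by
        rw [Measure.map_map measurable_fst hmt, ← hQ1, Measure.map_map hm1 measurable_fst]; rfl)
      (by
        rw [Measure.map_map measurable_snd hmt, ← hQ2, Measure.map_map hm2 measurable_snd]; rfl)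
    refine (ENNReal.rpow_le_rpow hw hp0.le).trans ?_
    rw [← ENNReal.rpow_mul, one_div_mul_cancel hp0.ne', ENNReal.rpow_one]
    refine (lintegral_map_le _ _).trans ?_
    simp only [aux_prodDist_pow hp]
    rw [lintegral_add_left hemB]
  · have e : ∫⁻ t, c₂ t ∂Γ = ∫⁻ t, edist (G₀ t.1) (G t.2) ^ p ∂P := by
      rw [hP, lintegral_map hGG hX]
      exact (Measure.lintegral_compProd hmG).symm
    calc ∫⁻ t, (edist t.1 t.2 ^ p + (c₁ t + c₂ t)) ∂Γ
        = ∫⁻ t, (edist t.1 t.2 ^ p + c₁ t) ∂Γ + ∫⁻ t, c₂ t ∂Γ := by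
          rw [← lintegral_add_right _ hc₂m]
          simp only [add_assoc]
      _ ≤ (2 ^ p * L + L) + 2 ^ p * (ε₁ + L) := by
          rw [e]; exact add_le_add hcost hPG
      _ = (2 ^ p + 1 + 2 ^ p) * L + 2 ^ p * ε₁ := by ring
      _ ≤ (2 ^ p + 1 + 2 ^ p) * L₁ + 2 ^ p * ε₁ := by
          gcongr; exact hδ.trans (min_le_left _ _)
      _ ≤ ε / 2 + ε / 2 := by gcongr
      _ = ε := ENNReal.add_halves _

/-- Lower integrals of possibly nonmeasurable functions of the first coordinate. -/
theorem aux_lintegral_fst {Z W : Type*} [MeasurableSpace Z] [MeasurableSpace W]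
    [StandardBorelSpace W] [Nonempty W] (T : Measure (Z × W)) [IsFiniteMeasure T]
    (f : Z → ℝ≥0∞) : ∫⁻ t, f t.1 ∂T ≤ ∫⁻ z, f z ∂(T.map Prod.fst) := by
  obtain ⟨h, hm, hle, heq⟩ := exists_measurable_le_lintegral_eq T (fun t => f t.1)
  rw [heq]
  have e : T = T.fst ⊗ₘ T.condKernel := (T.disintegrate T.condKernel).symm
  conv_lhs => rw [e]
  rw [Measure.lintegral_compProd hm]
  refine lintegral_mono fun z => ?_
  calc ∫⁻ w, h (z, w) ∂(T.condKernel z) ≤ ∫⁻ _, f z ∂(T.condKernel z) :=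
        lintegral_mono fun w => hle (z, w)
    _ = f z := by rw [lintegral_const, measure_univ, mul_one]

/-- Triangle-type estimate in the nested space, with an arbitrary first measure. -/
theorem aux_nested {A X : Type*} [MetricSpace A] [CompleteSpace A] [SecondCountableTopology A]
    [MeasurableSpace A] [BorelSpace A] [Nonempty A] [MeasurableSpace X] [StandardBorelSpace X]
    [Nonempty X] {p : ℝ} (hp : 1 ≤ p) {d : X → X → ℝ≥0∞}
    (hd : Measurable (fun z : X × X => d z.1 z.2))
    (htri : ∀ x y z, d x z ≤ d x y + d y z)
    (α₀ α : Measure A) [IsProbabilityMeasure α₀] (κ₀ κ : Kernel A X)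
    [IsMarkovKernel κ₀] [IsMarkovKernel κ] (θ : Measure (A × Measure X))
    (π : Measure ((A × Measure X) × (A × Measure X))) (hπ1 : π.map Prod.fst = θ)
    (hπ2 : π.map Prod.snd = α₀.map (fun a => (a, κ₀ a)))
    (Γ : Measure (A × A)) (hΓ1 : Γ.map Prod.fst = α₀) (hΓ2 : Γ.map Prod.snd = α)
    {c : A × A → ℝ≥0∞} (hcm : Measurable c) (hc : ∀ t, Wp p d (κ₀ t.1) (κ t.2) ^ p ≤ c t) :
    Wp p (prodDist p edist (Wp p d)) θ (α.map (fun a => (a, κ a))) ≤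
      (∫⁻ z, prodDist p edist (Wp p d) z.1 z.2 ^ p ∂π) ^ (1 / p) +
        (∫⁻ t, (edist t.1 t.2 ^ p + c t) ∂Γ) ^ (1 / p) := by
  have hp0 : 0 < p := by linarith
  have hk₀ : Measurable (fun a : A => (a, κ₀ a)) := measurable_id.prodMk κ₀.measurable
  have hk : Measurable (fun a : A => (a, κ a)) := measurable_id.prodMk κ.measurable
  have hΓp : IsProbabilityMeasure Γ := aux_prob_of_map measurable_fst hΓ1
  have hνp : IsProbabilityMeasure (α₀.map (fun a => (a, κ₀ a))) :=
    Measure.isProbabilityMeasure_map hk₀.aemeasurable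
  have hπp : IsProbabilityMeasure π := aux_prob_of_map measurable_snd hπ2
  have hms : Measurable (fun t : A × A => ((t.1, κ₀ t.1), t.2)) :=
    (hk₀.comp measurable_fst).prodMk measurable_snd
  have hσp : IsProbabilityMeasure (Γ.map (fun t : A × A => ((t.1, κ₀ t.1), t.2))) :=
    Measure.isProbabilityMeasure_map hms.aemeasurable
  obtain ⟨T, hT1, hT2⟩ := aux_glue π (Γ.map (fun t : A × A => ((t.1, κ₀ t.1), t.2))) (by
    rw [hπ2, Measure.map_map measurable_fst hms, ← hΓ1, Measure.map_map hk₀ measurable_fst]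
    rfl)
  have m13 : Measurable (fun t : ((A × Measure X) × (A × Measure X)) × A =>
      (t.1.1, (t.2, κ t.2))) :=
    (measurable_fst.comp measurable_fst).prodMk (hk.comp measurable_snd)
  have m23 : Measurable (fun t : ((A × Measure X) × (A × Measure X)) × A => (t.1.2, t.2)) := by
    fun_prop
  have m2a : Measurable (fun z : (A × Measure X) × A => (z.1.1, z.2)) := by fun_prop
  set g : ((A × Measure X) × (A × Measure X)) × A → ℝ≥0∞ := fun t =>
    (edist t.1.2.1 t.2 ^ p + c (t.1.2.1, t.2)) ^ (1 / p) with hg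
  have mg0 : Measurable (fun t : A × A => edist t.1 t.2 ^ p + c t) :=
    ((measurable_fst.edist measurable_snd).pow_const p).add hcm
  have hgm : Measurable g := (mg0.comp (m2a.comp m23)).pow_const _
  have hae : ∀ᵐ t ∂T, t.1.2.2 = κ₀ t.1.2.1 := by
    have h1 := aux_graph_ae α₀ κ₀
    rw [← hπ2] at h1
    have h2 := ae_of_ae_map measurable_snd.aemeasurable h1
    rw [← hT1] at h2
    exact ae_of_ae_map measurable_fst.aemeasurable h2
  have hW := aux_Wp_le (p := p) (d := prodDist p edist (Wp p d)) (μ := θ)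
    (ν := α.map (fun a => (a, κ a))) (T.map (fun t => (t.1.1, (t.2, κ t.2))))
    (by
      rw [Measure.map_map measurable_fst m13, ← hπ1, ← hT1,
        Measure.map_map measurable_fst measurable_fst]
      rfl)
    (by
      have e1 : (Prod.snd ∘ fun t : ((A × Measure X) × (A × Measure X)) × A =>
        (t.1.1, (t.2, κ t.2))) = ((fun a => (a, κ a)) ∘ Prod.snd) ∘ (fun t => (t.1.2, t.2)) := rfl
      rw [Measure.map_map measurable_snd m13, e1, ← Measure.map_map (hk.comp measurable_snd) m23,
        hT2, Measure.map_map (hk.comp measurable_snd) hms, ← hΓ2,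
        Measure.map_map hk measurable_snd]
      rfl)
  refine hW.trans ?_
  have hgp : ∫⁻ t, g t ^ p ∂T = ∫⁻ t, (edist t.1 t.2 ^ p + c t) ∂Γ := by
    have e2 : ∀ t, g t ^ p = edist t.1.2.1 t.2 ^ p + c (t.1.2.1, t.2) := fun t => by
      rw [hg]; dsimp only
      rw [← ENNReal.rpow_mul, one_div_mul_cancel hp0.ne', ENNReal.rpow_one]
    simp only [e2]
    have e3 := lintegral_map (μ := T) (mg0.comp m2a) m23
    rw [hT2, lintegral_map (mg0.comp m2a) hms] at e3
    exact e3.symm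
  have hfp : ∫⁻ t, prodDist p edist (Wp p d) t.1.1 t.1.2 ^ p ∂T ≤
      ∫⁻ z, prodDist p edist (Wp p d) z.1 z.2 ^ p ∂π := by
    have hTf : IsFiniteMeasure T := aux_finite_of_map measurable_fst hT1
    rw [← hT1]
    exact aux_lintegral_fst T (fun z => prodDist p edist (Wp p d) z.1 z.2 ^ p)
  calc (∫⁻ z, prodDist p edist (Wp p d) z.1 z.2 ^ p ∂(T.map (fun t => (t.1.1, (t.2, κ t.2)))))
          ^ (1 / p)
      ≤ (∫⁻ t, prodDist p edist (Wp p d) t.1.1 (t.2, κ t.2) ^ p ∂T) ^ (1 / p) := by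
        gcongr; exact lintegral_map_le _ _
    _ ≤ (∫⁻ t, (prodDist p edist (Wp p d) t.1.1 t.1.2 + g t) ^ p ∂T) ^ (1 / p) := by
        refine ENNReal.rpow_le_rpow (lintegral_mono_ae ?_) (by positivity)
        filter_upwards [hae] with t ht
        refine ENNReal.rpow_le_rpow ?_ hp0.le
        refine (aux_prodDist_le hp (x := edist t.1.2.1 t.2) (y := Wp p d (κ₀ t.1.2.1) (κ t.2))
          (v := t.1.2) (edist_triangle _ _ _) ?_).trans ?_
        · rw [ht]
          exact aux_Wp_triangle hp hd htri _ _ _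
        · gcongr
          rw [hg]; dsimp only
          gcongr
          exact hc (t.1.2.1, t.2)
    _ ≤ _ := aux_minkowski T hp _ g hgm
    _ ≤ _ := by rw [hgp]; gcongr

/-- **Lemma 2.2.**  On the set `D` of pairs `(μ', μ)` with
`und_A(μ') = marginal of μ on A × B`, the joint disintegration map
`J(μ', μ) = disint_A μ` is continuous for the (nested) `p`-Wasserstein
metrics. -/
theorem joint_disintegration_continuous
    {A B Y : Type} [MetricSpace A] [CompleteSpace A] [SecondCountableTopology A]
    [MeasurableSpace A] [BorelSpace A] [Nonempty A]
    [MetricSpace B] [CompleteSpace B] [SecondCountableTopology B]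
    [MeasurableSpace B] [BorelSpace B] [Nonempty B]
    [MetricSpace Y] [CompleteSpace Y] [SecondCountableTopology Y]
    [MeasurableSpace Y] [BorelSpace Y] [Nonempty Y]
    (p : ℝ) (hp : 1 ≤ p) :
    let dA : A → A → ℝ≥0∞ := edist
    let dB : B → B → ℝ≥0∞ := edist
    let dY : Y → Y → ℝ≥0∞ := edist
    let dAB := prodDist p dA dB
    let dBY := prodDist p dB dY
    let d1 := prodDist p dA (Wp p dB)
    let d2 := prodDist p dAB dY
    let dT := prodDist p dA (Wp p dBY)
    let D := {u : Measure (A × Measure B) × Measure ((A × B) × Y) //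
      (MemPp p d1 u.1 ∧
        (∃ g : A → Measure B, Measurable g ∧ u.1 {z | z.2 = g z.1} = 1) ∧
        (∀ᵐ z ∂u.1, MemPp p dB z.2)) ∧
      (MemPp p d2 u.2 ∧
        (∃ G : A × B → Y, Measurable G ∧ u.2 {z | z.2 = G z.1} = 1)) ∧
      und u.1 = u.2.map Prod.fst}
    let τD : TopologicalSpace D :=
      TopologicalSpace.induced (fun u => u.1.1) (ballTop (Wp p d1)) ⊓
        TopologicalSpace.induced (fun u => u.1.2) (ballTop (Wp p d2))
    let J : D → Measure (A × Measure (B × Y)) :=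
      fun u => disint (u.1.2.map (fun z => (z.1.1, (z.1.2, z.2))))
    @Continuous D (Measure (A × Measure (B × Y))) τD (ballTop (Wp p dT)) J := by
  intro dA dB dY dAB dBY d1 d2 dT D τD J
  have hp0 : 0 < p := by linarith
  have hz : ∀ {α β : Type} {e₁ : α → α → ℝ≥0∞} {e₂ : β → β → ℝ≥0∞}, (∀ x, e₁ x x = 0) →
      (∀ x, e₂ x x = 0) → ∀ x, prodDist p e₁ e₂ x x = 0 := by
    intro α β e₁ e₂ h₁ h₂ x
    simp [prodDist, h₁, h₂, hp0]
  have hd1 : ∀ x, d1 x x = 0 := hz edist_self (aux_Wp_self hp edist_self)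
  have hd2 : ∀ x, d2 x x = 0 := hz (hz edist_self edist_self) edist_self
  have hBYm : Measurable (fun z : (B × Y) × (B × Y) => dBY z.1 z.2) := by
    have m1 : Measurable (fun z : (B × Y) × (B × Y) => edist z.1.1 z.2.1 ^ p) :=
      ((measurable_fst.comp measurable_fst).edist
        (measurable_fst.comp measurable_snd)).pow_const p
    have m2 : Measurable (fun z : (B × Y) × (B × Y) => edist z.1.2 z.2.2 ^ p) :=
      ((measurable_snd.comp measurable_fst).edist
        (measurable_snd.comp measurable_snd)).pow_const p
    exact (m1.add m2).pow_const (1 / p)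
  have hBYt : ∀ x y z, dBY x z ≤ dBY x y + dBY y z := fun x y z =>
    aux_prodDist_le hp (edist_triangle _ _ _) (edist_triangle _ _ _)
  letI := τD
  refine continuous_generateFrom_iff.2 ?_
  rintro s ⟨θ, r, -, rfl⟩
  refine isOpen_iff_mem_nhds.2 fun u0 hu0 => ?_
  obtain ⟨⟨hM1, hg0, hP0⟩, ⟨hM2, hG0⟩, hund0⟩ := u0.2
  have : IsProbabilityMeasure u0.1.1 := hM1.1
  have : IsProbabilityMeasure u0.1.2 := hM2.1
  obtain ⟨α₀, γ₀, G₀, hα₀, hγ₀, hG₀, hu1, hu2, hJ0, hMem0⟩ :=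
    aux_struct hp u0.1.1 u0.1.2 hg0 hP0 hG0 hund0
  obtain ⟨κ₀, hκ₀, hκ₀e⟩ := aux_kerG γ₀ hG₀
  have hJ0' : J u0 = α₀.map (fun a => (a, κ₀ a)) := by simp only [hκ₀e]; exact hJ0
  obtain ⟨π, hπ1, hπ2, hπc⟩ := aux_Wp_lt (show Wp p dT θ (J u0) < r from hu0)
  rw [hJ0'] at hπ2
  obtain ⟨ρ, hρ0, hρ⟩ : ∃ ρ : ℝ≥0∞, ρ ≠ 0 ∧ (∫⁻ z, dT z.1 z.2 ^ p ∂π) ^ (1 / p) + ρ < r := by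
    obtain ⟨q, hq1, hq2⟩ := exists_between hπc
    refine ⟨q - (∫⁻ z, dT z.1 z.2 ^ p ∂π) ^ (1 / p), (tsub_pos_of_lt hq1).ne', ?_⟩
    rwa [add_tsub_cancel_of_le hq1.le]
  obtain ⟨y₀, hy₀⟩ : ∃ y₀ : Y, ∫⁻ x, edist y₀ (G₀ x) ^ p ∂(α₀ ⊗ₘ γ₀) ≠ ∞ := by
    obtain ⟨-, x₀, hx₀⟩ := hM2
    refine ⟨x₀.2, ne_top_of_le_ne_top hx₀ ?_⟩
    have hGm : Measurable (fun x : A × B => (x, G₀ x)) := measurable_id.prodMk hG₀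
    have hme : Measurable (fun z : (A × B) × Y => edist x₀.2 z.2 ^ p) :=
      (measurable_const.edist measurable_snd).pow_const p
    calc ∫⁻ x, edist x₀.2 (G₀ x) ^ p ∂(α₀ ⊗ₘ γ₀)
        = ∫⁻ z, edist x₀.2 z.2 ^ p ∂u0.1.2 := by rw [hu2, lintegral_map hme hGm]
      _ ≤ _ := by
          refine lintegral_mono fun z => ?_
          rw [aux_prodDist_pow hp]
          exact le_add_self
  have hε : ρ ^ p ≠ 0 := by rw [Ne, ENNReal.rpow_eq_zero_iff_of_pos hp0]; exact hρ0
  obtain ⟨δ, hδ0, hδ⟩ := aux_main hp α₀ γ₀ hG₀ hMem0 hy₀ hε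
  have hδp : 0 < δ := pos_iff_ne_zero.2 hδ0
  have ho1 : IsOpen {u : D | Wp p d1 u0.1.1 u.1.1 < δ} := by
    refine (inf_le_left : τD ≤ _) _ ⟨{y | Wp p d1 u0.1.1 y < δ}, ?_, rfl⟩
    exact TopologicalSpace.isOpen_generateFrom_of_mem ⟨_, δ, hδp, rfl⟩
  have ho2 : IsOpen {u : D | Wp p d2 u0.1.2 u.1.2 < δ} := by
    refine (inf_le_right : τD ≤ _) _ ⟨{y | Wp p d2 u0.1.2 y < δ}, ?_, rfl⟩
    exact TopologicalSpace.isOpen_generateFrom_of_mem ⟨_, δ, hδp, rfl⟩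
  have hn1 : {u : D | Wp p d1 u0.1.1 u.1.1 < δ} ∈ 𝓝 u0 :=
    ho1.mem_nhds (by change Wp p d1 u0.1.1 u0.1.1 < δ; rw [aux_Wp_self hp hd1]; exact hδp)
  have hn2 : {u : D | Wp p d2 u0.1.2 u.1.2 < δ} ∈ 𝓝 u0 :=
    ho2.mem_nhds (by change Wp p d2 u0.1.2 u0.1.2 < δ; rw [aux_Wp_self hp hd2]; exact hδp)
  filter_upwards [hn1, hn2] with u h1 h2
  obtain ⟨⟨hN1, hg, hP⟩, ⟨hN2, hG'⟩, hund⟩ := u.2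
  have : IsProbabilityMeasure u.1.1 := hN1.1
  have : IsProbabilityMeasure u.1.2 := hN2.1
  obtain ⟨α, γ, G, hα, hγ, hG, hv1, hv2, hJ, hMem⟩ := aux_struct hp u.1.1 u.1.2 hg hP hG' hund
  obtain ⟨κ, hκ, hκe⟩ := aux_kerG γ hG
  have hJ' : J u = α.map (fun a => (a, κ a)) := by simp only [hκe]; exact hJ
  change Wp p d1 u0.1.1 u.1.1 < δ at h1
  change Wp p d2 u0.1.2 u.1.2 < δ at h2
  rw [hu1, hv1] at h1
  rw [hu2, hv2] at h2
  obtain ⟨Γ, c, hΓ1, hΓ2, hcm, hc, hcost⟩ := hδ α γ G hα hγ hG hMem h1 h2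
  simp only [← hκ₀e, ← hκe] at hc
  have key := aux_nested hp hBYm hBYt α₀ α κ₀ κ θ π hπ1 hπ2 Γ hΓ1 hΓ2 hcm hc
  rw [← hJ'] at key
  change Wp p dT θ (J u) < r
  refine (key.trans ?_).trans_lt hρ
  refine add_le_add le_rfl ?_
  calc _ ≤ (ρ ^ p) ^ (1 / p) := ENNReal.rpow_le_rpow hcost (by positivity)
    _ = ρ := by rw [← ENNReal.rpow_mul, mul_one_div_cancel hp0.ne', ENNReal.rpow_one]

end AWPaper
end
end

section
/- Let X, Y be Polish metric spaces and let μ ∈ FP(X, Y), i.e. μ ∈ 𝒫_p(X × Y) is concentrated on the graph of a Borel function X → Y. For every ε > 0 there exists δ > 0 such that: for every ν ∈ 𝒫_p(X × Y) with W_p(μ, ν) < δ and every coupling γ of μ and ν (a probability measure on (X × Y)² with marginals μ and ν) satisfying ∫ ρ(x_1, x_2)^p dγ((x_1,y_1),(x_2,y_2)) < δ^p, one has ∫ ρ(y_1, y_2)^p dγ((x_1,y_1),(x_2,y_2)) < ε^p. -/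
open MeasureTheory ProbabilityTheory ENNReal Filter Topology

noncomputable section

namespace AWPaper

/-! ### Generic constructions -/

variable {α β : Type*}

/-! ### Path spaces -/

variable {X : Type*} [MeasurableSpace X]

lemma mid_aux {X E : Type*} [MetricSpace X] [MeasurableSpace X] [BorelSpace X]
    [NormedAddCommGroup E] (m : Measure X) [IsProbabilityMeasure m]
    (g : X → E) (hg : Continuous g) (C : ℝ≥0∞) (hC0 : C ≠ 0) (hCt : C ≠ ∞)
    (hC : ∀ x y, edist (g x) (g y) ≤ C) (p : ℝ) (hp : 1 ≤ p)
    (η : ℝ≥0∞) (hη : 0 < η) (hηt : η ≠ ∞) :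
    ∃ δ : ℝ≥0∞, 0 < δ ∧ ∀ {Ω : Type _} [MeasurableSpace Ω] (θ : Measure Ω) (a b : Ω → X),
      Measurable a → θ.map a = m →
      (∫⁻ z, edist (a z) (b z) ^ p ∂θ) < δ ^ p →
      (∫⁻ z, edist (g (a z)) (g (b z)) ^ p ∂θ) ≤ η ^ p := by
  have hp0 : 0 < p := by linarith
  set r : ℝ≥0∞ := η ^ p / 3 with hr
  have hηp : 0 < η ^ p := ENNReal.rpow_pos hη hηt
  have hηpt : η ^ p ≠ ∞ := ENNReal.rpow_ne_top_of_nonneg hp0.le hηt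
  have hr0 : 0 < r := ENNReal.div_pos hηp.ne' (by norm_num)
  have hrt : r ≠ ∞ := ENNReal.div_ne_top hηpt (by norm_num)
  have hCp0 : C ^ p ≠ 0 := (ENNReal.rpow_pos (pos_iff_ne_zero.2 hC0) hCt).ne'
  have hCpt : C ^ p ≠ ∞ := ENNReal.rpow_ne_top_of_nonneg hp0.le hCt
  let A : ℕ → Set X := fun n =>
    {x | ∀ x', edist x x' < ((n : ℝ≥0∞) + 1)⁻¹ → edist (g x) (g x') ^ p ≤ r}
  have hAc : ∀ n, IsClosed (A n) := by
    intro n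
    have : A n = ⋂ x', {x | edist x x' < ((n : ℝ≥0∞) + 1)⁻¹ → edist (g x) (g x') ^ p ≤ r} := by
      ext x; simp [A]
    rw [this]
    refine isClosed_iInter fun x' => ?_
    refine isClosed_imp ?_ ?_
    · exact isOpen_lt (by fun_prop) continuous_const
    · refine isClosed_le ?_ continuous_const
      exact (ENNReal.continuous_rpow_const).comp (by fun_prop)
  have hlim : Tendsto (fun n => m (A n)ᶜ) atTop (𝓝 0) := by
    have h0 : ⋂ n, (A n)ᶜ = ∅ := by
      rw [← Set.compl_iUnion, Set.compl_empty_iff, Set.eq_univ_iff_forall]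
      intro x
      have hc : ContinuousAt (fun x' => edist (g x) (g x') ^ p) x := by
        refine ((ENNReal.continuous_rpow_const).comp ?_).continuousAt
        fun_prop
      have h1 : ∀ᶠ x' in 𝓝 x, edist (g x) (g x') ^ p < r := by
        refine hc.eventually_lt_const ?_
        simpa [hp0] using hr0
      obtain ⟨s, hs, hs'⟩ := EMetric.mem_nhds_iff.1 h1
      obtain ⟨n, hn⟩ := ENNReal.exists_inv_nat_lt hs.ne'
      refine Set.mem_iUnion.2 ⟨n, fun x' hx' => ?_⟩
      refine le_of_lt (hs' ?_)
      have : x' ∈ Metric.eball x s := by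
        rw [Metric.mem_eball, edist_comm]
        refine hx'.trans (lt_of_le_of_lt ?_ hn)
        exact ENNReal.inv_le_inv.2 le_self_add
      exact this
    have := tendsto_measure_iInter_atTop (μ := m) (s := fun n => (A n)ᶜ)
      (fun n => (hAc n).measurableSet.compl.nullMeasurableSet) ?_ ⟨0, measure_ne_top _ _⟩
    · rwa [h0, measure_empty] at this
    · intro n k hnk
      refine Set.compl_subset_compl.2 fun x hx x' hx' => hx x' (hx'.trans_le ?_)
      exact ENNReal.inv_le_inv.2 (by gcongr)
  obtain ⟨n, hn⟩ : ∃ n, m (A n)ᶜ < r / C ^ p := by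
    exact (hlim.eventually_lt_const (ENNReal.div_pos hr0.ne' hCpt)).exists
  set N : ℝ≥0∞ := ((n : ℝ≥0∞) + 1) ^ p with hN
  have hn1 : ((n : ℝ≥0∞) + 1) ≠ ∞ := by simp
  have hn0 : ((n : ℝ≥0∞) + 1) ≠ 0 := by simp
  have hN0 : N ≠ 0 := (ENNReal.rpow_pos (pos_iff_ne_zero.2 hn0) hn1).ne'
  have hNt : N ≠ ∞ := ENNReal.rpow_ne_top_of_nonneg hp0.le hn1
  have hCN0 : C ^ p * N ≠ 0 := mul_ne_zero hCp0 hN0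
  have hCNt : C ^ p * N ≠ ∞ := ENNReal.mul_ne_top hCpt hNt
  refine ⟨(r / (C ^ p * N)) ^ (1 / p), ?_, ?_⟩
  · exact ENNReal.rpow_pos (ENNReal.div_pos hr0.ne' hCNt) (ENNReal.div_ne_top hrt hCN0)
  intro Ω _ θ a b ha hθ hd
  rw [← ENNReal.rpow_mul, one_div_mul_cancel hp0.ne', ENNReal.rpow_one] at hd
  have hθ1 : θ Set.univ = 1 := by
    have := congrArg (fun ν => ν Set.univ) hθ
    simpa [Measure.map_apply ha MeasurableSet.univ] using this
  have hpt : ∀ z, edist (g (a z)) (g (b z)) ^ p ≤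
      (r + (a ⁻¹' (A n)ᶜ).indicator (fun _ => C ^ p) z) +
        (C ^ p * N) * edist (a z) (b z) ^ p := by
    intro z
    by_cases hz : a z ∈ A n
    · by_cases hd : edist (a z) (b z) < ((n : ℝ≥0∞) + 1)⁻¹
      · exact (hz _ hd).trans (by rw [add_assoc]; exact le_self_add)
      · push Not at hd
        refine le_trans ?_ le_add_self
        have h1 : (1 : ℝ≥0∞) ≤ N * edist (a z) (b z) ^ p := by
          rw [hN, ← ENNReal.mul_rpow_of_nonneg _ _ hp0.le]
          refine ENNReal.one_le_rpow ?_ hp0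
          calc (1 : ℝ≥0∞) = ((n : ℝ≥0∞) + 1) * ((n : ℝ≥0∞) + 1)⁻¹ :=
                (ENNReal.mul_inv_cancel hn0 hn1).symm
            _ ≤ _ := by gcongr
        calc edist (g (a z)) (g (b z)) ^ p ≤ C ^ p * 1 := by
              rw [mul_one]; exact ENNReal.rpow_le_rpow (hC _ _) hp0.le
          _ ≤ C ^ p * (N * edist (a z) (b z) ^ p) := by gcongr
          _ = _ := by rw [mul_assoc]
    · have : z ∈ a ⁻¹' (A n)ᶜ := hz
      rw [Set.indicator_of_mem this, add_comm r, add_assoc]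
      exact (ENNReal.rpow_le_rpow (hC _ _) hp0.le).trans le_self_add
  have hms : MeasurableSet (a ⁻¹' (A n)ᶜ) := ha (hAc n).measurableSet.compl
  calc (∫⁻ z, edist (g (a z)) (g (b z)) ^ p ∂θ)
      ≤ ∫⁻ z, (r + (a ⁻¹' (A n)ᶜ).indicator (fun _ => C ^ p) z) +
        (C ^ p * N) * edist (a z) (b z) ^ p ∂θ := lintegral_mono hpt
    _ = (r + C ^ p * m (A n)ᶜ) + (C ^ p * N) * ∫⁻ z, edist (a z) (b z) ^ p ∂θ := by
        rw [lintegral_add_left (by fun_prop (disch := assumption)),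
          lintegral_const_mul' _ _ hCNt,
          lintegral_add_left measurable_const, lintegral_const, hθ1, mul_one,
          lintegral_indicator_const hms, ← hθ, Measure.map_apply ha (hAc n).measurableSet.compl]
    _ ≤ (r + C ^ p * (r / C ^ p)) + (C ^ p * N) * (r / (C ^ p * N)) := by gcongr
    _ = η ^ p := by
        rw [ENNReal.mul_div_cancel hCp0 hCpt, ENNReal.mul_div_cancel hCN0 hCNt]
        rw [hr, ENNReal.add_thirds]

lemma eLp_eq {Ω E : Type*} [MeasurableSpace Ω] [NormedAddCommGroup E] (θ : Measure Ω)
    (u v : Ω → E) (p : ℝ) (hp : 1 ≤ p) :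
    eLpNorm (fun z => u z - v z) (ENNReal.ofReal p) θ =
      (∫⁻ z, edist (u z) (v z) ^ p ∂θ) ^ (1 / p) := by
  have hp0 : 0 < p := by linarith
  rw [eLpNorm_eq_lintegral_rpow_enorm_toReal (by simpa using hp0) ENNReal.ofReal_ne_top,
    ENNReal.toReal_ofReal hp0.le]
  simp_rw [edist_eq_enorm_sub]

/-- **Lemma 4.2 of the companion paper.**  Let `μ ∈ FP(X, Y)`.  For every
`ε > 0` there is `δ > 0` such that for every `ν` with `𝒲_p(μ, ν) < δ` and every
coupling `γ` of `μ` and `ν` whose `X`-displacement cost is `< δ^p`, the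
`Y`-displacement cost is `< ε^p`. -/
theorem graph_measure_stability
    {X Y : Type} [MetricSpace X] [CompleteSpace X] [SecondCountableTopology X]
    [MeasurableSpace X] [BorelSpace X] [Nonempty X]
    [MetricSpace Y] [CompleteSpace Y] [SecondCountableTopology Y]
    [MeasurableSpace Y] [BorelSpace Y] [Nonempty Y]
    (p : ℝ) (hp : 1 ≤ p)
    (μ : Measure (X × Y))
    (hμ : MemPp p (prodDist p (edist : X → X → ℝ≥0∞) (edist : Y → Y → ℝ≥0∞)) μ)
    (f : X → Y) (hf : Measurable f) (hgraph : μ {z | z.2 = f z.1} = 1)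
    (ε : ℝ≥0∞) (hε : 0 < ε) :
    ∃ δ : ℝ≥0∞, 0 < δ ∧
      ∀ ν : Measure (X × Y),
        MemPp p (prodDist p (edist : X → X → ℝ≥0∞) (edist : Y → Y → ℝ≥0∞)) ν →
        Wp p (prodDist p (edist : X → X → ℝ≥0∞) (edist : Y → Y → ℝ≥0∞)) μ ν < δ →
        ∀ γ : Measure ((X × Y) × (X × Y)), γ ∈ Cpl μ ν →
          (∫⁻ z, edist z.1.1 z.2.1 ^ p ∂γ) < δ ^ p →
          (∫⁻ z, edist z.1.2 z.2.2 ^ p ∂γ) < ε ^ p := by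
  classical
  have hp0 : 0 < p := by linarith
  have hq1 : (1 : ℝ≥0∞) ≤ ENNReal.ofReal p := by simpa using hp
  obtain ⟨hμ1, ⟨x₀, y₀⟩, hmom⟩ := hμ
  set η : ℝ≥0∞ := min ε 1 / 6 with hη
  have hm0 : min ε 1 ≠ 0 := (lt_min hε one_pos).ne'
  have hmt : min ε 1 ≠ ∞ := ((min_le_right _ _).trans_lt ENNReal.one_lt_top).ne
  have hη0 : 0 < η := ENNReal.div_pos hm0 (by norm_num)
  have hηt : η ≠ ∞ := ENNReal.div_ne_top hmt (by norm_num)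
  let e : Y → lp (fun _ : ℕ => ℝ) ∞ := fun y => kuratowskiEmbedding Y y - kuratowskiEmbedding Y y₀
  have he : ∀ y y', edist (e y) (e y') = edist y y' := by
    intro y y'
    simp only [e, edist_sub_right]
    exact kuratowskiEmbedding.isometry Y y y'
  have hec : Continuous e := Isometry.continuous he
  have he0 : e y₀ = 0 := by simp [e]
  set m : Measure X := μ.map Prod.fst with hm
  have hm1 : IsProbabilityMeasure m := Measure.isProbabilityMeasure_map (by fun_prop)
  have hesm : StronglyMeasurable (fun x => e (f x)) :=
    hec.comp_stronglyMeasurable hf.stronglyMeasurable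
  have hae : ∀ᵐ z ∂μ, z.2 = f z.1 := by
    have hms : MeasurableSet {z : X × Y | z.2 = f z.1} :=
      measurableSet_eq_fun (by fun_prop) (by fun_prop)
    exact (prob_compl_eq_zero_iff hms).2 hgraph
  have hpd : ∀ z w : X × Y, prodDist p (edist : X → X → ℝ≥0∞) (edist : Y → Y → ℝ≥0∞) z w ^ p
      = edist z.1 w.1 ^ p + edist z.2 w.2 ^ p := by
    intro z w
    rw [prodDist, ← ENNReal.rpow_mul, one_div_mul_cancel hp0.ne', ENNReal.rpow_one]
  have hmem : MemLp (fun x => e (f x)) (ENNReal.ofReal p) m := by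
    refine ⟨hesm.aestronglyMeasurable, ?_⟩
    rw [hm, eLpNorm_map_measure hesm.aestronglyMeasurable (by fun_prop)]
    have h1 : eLpNorm ((fun x => e (f x)) ∘ Prod.fst) (ENNReal.ofReal p) μ =
        eLpNorm (fun z : X × Y => e z.2 - e y₀) (ENNReal.ofReal p) μ := by
      refine eLpNorm_congr_ae ?_
      filter_upwards [hae] with z hz
      simp [he0, hz]
    rw [h1, eLp_eq _ (fun z : X × Y => e z.2) (fun _ => e y₀) p hp]
    refine ENNReal.rpow_lt_top_of_nonneg (by positivity) ?_
    refine ne_top_of_le_ne_top hmom (lintegral_mono fun z => ?_)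
    rw [hpd, he, edist_comm]
    exact le_add_self
  obtain ⟨g, hg, -⟩ := hmem.exists_boundedContinuous_eLpNorm_sub_le ENNReal.ofReal_ne_top hη0.ne'
  let C : ℝ≥0∞ := ENNReal.ofReal (2 * ‖g‖ + 1)
  have hC : ∀ x y, edist (g x) (g y) ≤ C := by
    intro x y
    rw [edist_dist]
    exact ENNReal.ofReal_le_ofReal ((g.dist_le_two_norm x y).trans (by linarith))
  obtain ⟨δ₁, hδ₁, hmid⟩ := mid_aux m g g.continuous C
    (by simp only [C, ne_eq, ENNReal.ofReal_eq_zero, not_le]; positivity)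
    ENNReal.ofReal_ne_top hC p hp η hη0 hηt
  refine ⟨min δ₁ η, lt_min hδ₁ hη0, ?_⟩
  intro ν _ hW γ hγ hγd
  let K : X × Y → lp (fun _ : ℕ => ℝ) ∞ := fun z => e z.2
  let G : X × Y → lp (fun _ : ℕ => ℝ) ∞ := fun z => g z.1
  let D : X × Y → lp (fun _ : ℕ => ℝ) ∞ := fun z => K z - G z
  have hKs : StronglyMeasurable K := hec.comp_stronglyMeasurable measurable_snd.stronglyMeasurable
  have hGs : StronglyMeasurable G :=
    g.continuous.comp_stronglyMeasurable measurable_fst.stronglyMeasurable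
  have hDs : StronglyMeasurable D := hKs.sub hGs
  have hDμ : eLpNorm D (ENNReal.ofReal p) μ ≤ η := by
    refine le_trans (le_of_eq ?_) hg
    rw [hm, eLpNorm_map_measure
      (hesm.sub g.continuous.stronglyMeasurable).aestronglyMeasurable (by fun_prop)]
    refine eLpNorm_congr_ae ?_
    filter_upwards [hae] with z hz
    simp [D, K, G, hz]
  -- estimates valid for any coupling with small `X`-displacement
  have hfst : ∀ θ ∈ Cpl μ ν,
      eLpNorm (fun z : (X × Y) × (X × Y) => D z.1) (ENNReal.ofReal p) θ ≤ η := by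
    intro θ hθ
    refine le_trans (le_of_eq ?_) hDμ
    rw [← hθ.1, eLpNorm_map_measure hDs.aestronglyMeasurable (by fun_prop)]
    rfl
  have hsnd : ∀ θ ∈ Cpl μ ν,
      eLpNorm (fun z : (X × Y) × (X × Y) => D z.2) (ENNReal.ofReal p) θ =
        eLpNorm D (ENNReal.ofReal p) ν := by
    intro θ hθ
    rw [← hθ.2, eLpNorm_map_measure hDs.aestronglyMeasurable (by fun_prop)]
    rfl
  have hGG : ∀ θ ∈ Cpl μ ν, (∫⁻ z, edist z.1.1 z.2.1 ^ p ∂θ) < (min δ₁ η) ^ p →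
      eLpNorm (fun z : (X × Y) × (X × Y) => G z.1 - G z.2) (ENNReal.ofReal p) θ ≤ η := by
    intro θ hθ hd
    rw [eLp_eq θ (fun z : (X × Y) × (X × Y) => G z.1) (fun z => G z.2) p hp]
    have := hmid θ (fun z => z.1.1) (fun z => z.2.1) (by fun_prop)
      (by rw [hm, ← hθ.1, Measure.map_map (by fun_prop) (by fun_prop)]; rfl)
      (hd.trans_le (ENNReal.rpow_le_rpow (min_le_left _ _) hp0.le))
    calc _ ≤ (η ^ p) ^ (1 / p) := ENNReal.rpow_le_rpow this (by positivity)
      _ = η := by rw [← ENNReal.rpow_mul, mul_one_div_cancel hp0.ne', ENNReal.rpow_one]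
  have hm1' : ∀ θ : Measure ((X × Y) × (X × Y)),
      AEStronglyMeasurable (fun z : (X × Y) × (X × Y) => D z.1) θ := fun θ =>
    (hDs.comp_measurable measurable_fst).aestronglyMeasurable
  have hm2' : ∀ θ : Measure ((X × Y) × (X × Y)),
      AEStronglyMeasurable (fun z : (X × Y) × (X × Y) => D z.2) θ := fun θ =>
    (hDs.comp_measurable measurable_snd).aestronglyMeasurable
  have hm3' : ∀ θ : Measure ((X × Y) × (X × Y)),
      AEStronglyMeasurable (fun z : (X × Y) × (X × Y) => G z.1 - G z.2) θ := fun θ =>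
    ((hGs.comp_measurable measurable_fst).sub
      (hGs.comp_measurable measurable_snd)).aestronglyMeasurable
  have hm4' : ∀ θ : Measure ((X × Y) × (X × Y)),
      AEStronglyMeasurable (fun z : (X × Y) × (X × Y) => K z.1 - K z.2) θ := fun θ =>
    ((hKs.comp_measurable measurable_fst).sub
      (hKs.comp_measurable measurable_snd)).aestronglyMeasurable
  -- the estimate on `ν` coming from an almost optimal coupling
  have hDν : eLpNorm D (ENNReal.ofReal p) ν ≤ η + (η + η) := by
    obtain ⟨π, hπ⟩ := iInf_lt_iff.1 hW
    obtain ⟨hπc, hπd⟩ := iInf_lt_iff.1 hπ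
    simp_rw [hpd] at hπd
    rw [one_div, ENNReal.rpow_inv_lt_iff hp0] at hπd
    have hx : (∫⁻ z, edist z.1.1 z.2.1 ^ p ∂π) < (min δ₁ η) ^ p :=
      (lintegral_mono fun z => le_self_add).trans_lt hπd
    have hy : (∫⁻ z, edist z.1.2 z.2.2 ^ p ∂π) < (min δ₁ η) ^ p :=
      (lintegral_mono fun z => le_add_self).trans_lt hπd
    have hKK : eLpNorm (fun z : (X × Y) × (X × Y) => K z.1 - K z.2) (ENNReal.ofReal p) π ≤ η := by
      rw [eLp_eq π (fun z : (X × Y) × (X × Y) => K z.1) (fun z => K z.2) p hp]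
      simp only [K, he]
      rw [one_div, ENNReal.rpow_inv_le_iff hp0]
      exact hy.le.trans (ENNReal.rpow_le_rpow (min_le_right _ _) hp0.le)
    have heq : (fun z : (X × Y) × (X × Y) => D z.2) =
        (fun z => D z.1) + ((fun z => G z.1 - G z.2) - (fun z => K z.1 - K z.2)) := by
      funext z
      simp only [D, Pi.add_apply, Pi.sub_apply]
      abel
    rw [← hsnd π hπc, heq]
    refine (eLpNorm_add_le (hm1' π) ((hm3' π).sub (hm4' π)) hq1).trans ?_
    refine add_le_add (hfst π hπc) ?_
    refine (eLpNorm_sub_le (hm3' π) (hm4' π) hq1).trans ?_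
    exact add_le_add (hGG π hπc hx) hKK
  have hfin : eLpNorm (fun z : (X × Y) × (X × Y) => K z.1 - K z.2) (ENNReal.ofReal p) γ ≤
      η + (η + (η + (η + η))) := by
    have heq : (fun z : (X × Y) × (X × Y) => K z.1 - K z.2) =
        (fun z => D z.1) + ((fun z => G z.1 - G z.2) - (fun z => D z.2)) := by
      funext z
      simp only [D, Pi.add_apply, Pi.sub_apply]
      abel
    rw [heq]
    refine (eLpNorm_add_le (hm1' γ) ((hm3' γ).sub (hm2' γ)) hq1).trans ?_
    refine add_le_add (hfst γ hγ) ?_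
    refine (eLpNorm_sub_le (hm3' γ) (hm2' γ) hq1).trans ?_
    refine add_le_add (hGG γ hγ hγd) ?_
    rw [hsnd γ hγ]
    exact hDν
  have hlt : η + (η + (η + (η + η))) < ε := by
    have h6 : η * 6 = min ε 1 := ENNReal.div_mul_cancel (by norm_num) (by norm_num)
    have h5 : η + (η + (η + (η + η))) = η * 5 := by ring
    calc η + (η + (η + (η + η))) = η * 5 := h5
      _ < η * 6 := (ENNReal.mul_lt_mul_iff_right hη0.ne' hηt).2 (by norm_num)
      _ ≤ ε := h6.le.trans (min_le_left _ _)
  have hlast := hfin.trans_lt hlt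
  rw [eLp_eq γ (fun z : (X × Y) × (X × Y) => K z.1) (fun z => K z.2) p hp, one_div,
    ENNReal.rpow_inv_lt_iff hp0] at hlast
  simpa only [K, he] using hlast

end AWPaper
end
end
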